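/- Let G be a 2-connected subgraph of Q_n with distinct vertices a, b such that every vertex z ∉ {a, b} has degree at least d ≥ 2 in G. Then G contains an a–b path of length at least 2^(d-1). -/

import Mathlib

def hypercube (n : ℕ) : SimpleGraph (Fin n → Bool) :=
  SimpleGraph.fromRel (fun x y => hammingDist x y = 1)

def TwoConnected {V : Type*} (H : SimpleGraph V) : Prop :=
  (∃ x y z : V, x ≠ y ∧ x ≠ z ∧ y ≠ z) ∧
  ∀ v : V, ((⊤ : H.Subgraph).deleteVerts {v}).coe.Connected


section Helpers

variable {V : Type*}

def LP (G : SimpleGraph V) (S : Set V) (a b : V) (k : ℕ) : Prop :=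
  ∃ p : G.Walk a b, p.IsPath ∧ (∀ v ∈ p.support, v ∈ S) ∧ k ≤ p.length

theorem LP.left_mem {G : SimpleGraph V} {S : Set V} {a b : V} {k : ℕ} (h : LP G S a b k) :
    a ∈ S := by
  obtain ⟨p, _, h, _⟩ := h
  exact h a p.start_mem_support

theorem LP.right_mem {G : SimpleGraph V} {S : Set V} {a b : V} {k : ℕ} (h : LP G S a b k) :
    b ∈ S := by
  obtain ⟨p, _, h, _⟩ := h
  exact h b p.end_mem_support

theorem LP.refl (G : SimpleGraph V) {S : Set V} {a : V} (h : a ∈ S) : LP G S a a 0 :=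
  ⟨SimpleGraph.Walk.nil, by simp, by simpa using h, by simp⟩

theorem LP.mono {G : SimpleGraph V} {S S' : Set V} {a b : V} {k k' : ℕ} (h : LP G S a b k)
    (hS : S ⊆ S') (hk : k' ≤ k) : LP G S' a b k' := by
  obtain ⟨p, hp, h, hl⟩ := h
  exact ⟨p, hp, fun v hv => hS (h v hv), hk.trans hl⟩

theorem LP.symm {G : SimpleGraph V} {S : Set V} {a b : V} {k : ℕ} (h : LP G S a b k) :
    LP G S b a k := by
  obtain ⟨p, hp, h, hl⟩ := h
  exact ⟨p.reverse, hp.reverse, by simpa using h, by simpa using hl⟩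

theorem LP.trans {G : SimpleGraph V} {S S' T : Set V} {a m b : V} {k k' : ℕ}
    (h : LP G S a m k) (h' : LP G S' m b k') (hd : ∀ v ∈ S, v ∈ S' → v = m)
    (hS : S ⊆ T) (hS' : S' ⊆ T) : LP G T a b (k + k') := by
  obtain ⟨p, hp, h, hl⟩ := h
  obtain ⟨q, hq, h', hl'⟩ := h'
  refine ⟨p.append q, ?_, ?_, ?_⟩
  · rw [SimpleGraph.Walk.isPath_def, SimpleGraph.Walk.support_append, List.nodup_append]
    have hq' := hq.support_nodup
    rw [← SimpleGraph.Walk.cons_tail_support, List.nodup_cons] at hq'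
    refine ⟨hp.support_nodup, hq'.2, ?_⟩
    rintro v hv w hw rfl
    have := hd v (h v hv) (h' v (List.mem_of_mem_tail hw))
    subst this
    exact hq'.1 hw
  · intro v hv
    rw [SimpleGraph.Walk.mem_support_append_iff] at hv
    rcases hv with hv | hv
    · exact hS (h v hv)
    · exact hS' (h' v hv)
  · rw [SimpleGraph.Walk.length_append]; omega

theorem LP.cons {G : SimpleGraph V} {S : Set V} {x y b : V} {k : ℕ}
    (hxy : G.Adj x y) (h : LP G S y b k) (hx : x ∉ S) : LP G (insert x S) x b (k + 1) := by
  obtain ⟨p, hp, h, hl⟩ := h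
  refine ⟨SimpleGraph.Walk.cons hxy p, ?_, ?_, ?_⟩
  · rw [SimpleGraph.Walk.cons_isPath_iff]
    exact ⟨hp, fun hh => hx (h x hh)⟩
  · intro v hv
    rw [SimpleGraph.Walk.support_cons, List.mem_cons] at hv
    rcases hv with hv | hv
    · exact Or.inl hv
    · exact Or.inr (h v hv)
  · rw [SimpleGraph.Walk.length_cons]; omega

theorem LP.edge {G : SimpleGraph V} {S S' T : Set V} {a x y b : V} {k k' : ℕ}
    (h : LP G S a x k) (hxy : G.Adj x y) (h' : LP G S' y b k') (hd : ∀ v ∈ S, v ∉ S')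
    (hS : S ⊆ T) (hS' : S' ⊆ T) : LP G T a b (k + 1 + k') := by
  have h2 := LP.cons hxy h' (hd x h.right_mem)
  have h3 := h.trans (T := T) h2 (fun v hv hv' => by
    rcases hv' with hv' | hv'
    · exact hv'
    · exact absurd hv' (hd v hv)) hS (by
      intro v hv
      rcases hv with hv | hv
      · rw [hv]; exact hS h.right_mem
      · exact hS' hv)
  exact h3.mono subset_rfl (by omega)

theorem LP.of_walk {G : SimpleGraph V} {S : Set V} {a b : V} (p : G.Walk a b)
    (h : ∀ v ∈ p.support, v ∈ S) : LP G S a b 0 := by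
  classical
  exact ⟨p.bypass, p.bypass_isPath, fun v hv => h v (p.support_bypass_subset_support hv), by simp⟩

theorem LP.trans0 {G : SimpleGraph V} {S : Set V} {a m b : V}
    (h : LP G S a m 0) (h' : LP G S m b 0) : LP G S a b 0 := by
  obtain ⟨p, hp, h, hl⟩ := h
  obtain ⟨q, hq, h', hl'⟩ := h'
  refine LP.of_walk (p.append q) ?_
  intro v hv
  rw [SimpleGraph.Walk.mem_support_append_iff] at hv
  rcases hv with hv | hv
  · exact h v hv
  · exact h' v hv

theorem LP.adj0 {G : SimpleGraph V} {S : Set V} {x y : V} (hx : x ∈ S) (hy : y ∈ S)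
    (h : G.Adj x y) : LP G S x y 0 := by
  refine LP.of_walk (SimpleGraph.Walk.cons h SimpleGraph.Walk.nil) ?_
  intro v hv
  simp at hv
  rcases hv with rfl | rfl <;> assumption

theorem LP.self_reach {G : SimpleGraph V} {S : Set V} {a b : V} {k : ℕ}
    (h : LP G S a b k) : LP G {u | LP G S u b 0} a b k := by
  classical
  obtain ⟨p, hp, h, hl⟩ := h
  refine ⟨p, hp, fun v hv => ?_, hl⟩
  exact LP.of_walk (p.dropUntil v hv) (fun w hw => h w (p.support_dropUntil_subset_support hv hw))

theorem LP.graph_mono {G H : SimpleGraph V} {S : Set V} {a b : V} {k : ℕ}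
    (hGH : ∀ x ∈ S, ∀ y ∈ S, G.Adj x y → H.Adj x y) (h : LP G S a b k) : LP H S a b k := by
  obtain ⟨p, hp, h, hl⟩ := h
  have key : ∀ {a b : V} (p : G.Walk a b), (∀ v ∈ p.support, v ∈ S) →
      ∃ q : H.Walk a b, q.support = p.support ∧ q.length = p.length := by
    intro a b p
    induction p with
    | nil => intro _; exact ⟨SimpleGraph.Walk.nil, rfl, rfl⟩
    | cons e p ih =>
      intro h
      obtain ⟨q, h1, h2⟩ := ih (fun v hv => h v (by simp [hv]))
      exact ⟨SimpleGraph.Walk.cons (hGH _ (h _ (by simp)) _ (h _ (by simp)) e) q,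
        by simp [h1], by simp [h2]⟩
  obtain ⟨q, h1, h2⟩ := key p h
  refine ⟨q, ?_, by rwa [h1], by rwa [h2]⟩
  rw [SimpleGraph.Walk.isPath_def, h1]; exact hp.support_nodup

/-- neighbours of `U` inside `X` lie in `U` or equal `t` -/
def Cl (G : SimpleGraph V) (X U : Set V) (t : V) : Prop :=
  ∀ x ∈ U, ∀ y ∈ X, G.Adj x y → y ∈ U ∨ y = t

def Cl2 (G : SimpleGraph V) (X U : Set V) (s t : V) : Prop :=
  ∀ x ∈ U, ∀ y ∈ X, G.Adj x y → y ∈ U ∨ y = s ∨ y = t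

def Good (G : SimpleGraph V) (S : Set V) (a b : V) : Prop :=
  ∀ U ⊆ S, U.Nonempty → a ∉ U → b ∉ U → ∀ t, ¬ Cl G S U t

def Conn (G : SimpleGraph V) (C : Set V) (a : V) : Prop :=
  ∀ U ⊆ C, U.Nonempty → a ∉ U → ∃ x ∈ U, ∃ y ∈ C, y ∉ U ∧ G.Adj x y

def reach (G : SimpleGraph V) (X : Set V) (r : V) : Set V := {v | LP G X r v 0}

theorem reach_sub {G : SimpleGraph V} {X : Set V} {r : V} : reach G X r ⊆ X :=
  fun _ h => LP.right_mem h

theorem reach_self {G : SimpleGraph V} {X : Set V} {r : V} (h : r ∈ X) : r ∈ reach G X r :=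
  LP.refl G h

theorem reach_step {G : SimpleGraph V} {X : Set V} {r v w : V} (h : v ∈ reach G X r)
    (hw : w ∈ X) (e : G.Adj v w) : w ∈ reach G X r :=
  LP.trans0 h (LP.adj0 (reach_sub h) hw e)

/-- closed sets contain everything reachable -/
theorem closed_reach {G : SimpleGraph V} {X U : Set V} {u v : V} {k : ℕ}
    (hU : ∀ x ∈ U, ∀ y ∈ X, G.Adj x y → y ∈ U) (hu : u ∈ U) (h : LP G X u v k) : v ∈ U := by
  obtain ⟨p, -, h, -⟩ := h
  induction p with
  | nil => exact hu
  | cons e p ih =>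
    have h' : ∀ v ∈ p.support, v ∈ X := fun v hv => h v (by simp [hv])
    exact ih (hU _ hu _ (h' _ p.start_mem_support) e) h'

theorem reach_path {G : SimpleGraph V} {X : Set V} {r v : V} (h : v ∈ reach G X r) :
    LP G (reach G X r) r v 0 := by
  have h1 := (LP.symm h).self_reach.symm
  exact h1.mono (fun u hu => LP.symm hu) le_rfl

theorem reach_path2 {G : SimpleGraph V} {X : Set V} {r u v : V} (hu : u ∈ reach G X r)
    (h : v ∈ reach G X r) : LP G (reach G X r) u v 0 :=
  (reach_path hu).symm.trans0 (reach_path h)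

theorem edge_out {G : SimpleGraph V} {X U : Set V} {u v : V} {k : ℕ}
    (hu : u ∈ U) (hv : v ∉ U) (h : LP G X u v k) :
    ∃ x ∈ U, ∃ y ∈ X, y ∉ U ∧ G.Adj x y := by
  by_contra hc
  push Not at hc
  refine hv (closed_reach (fun x hx y hy e => ?_) hu h)
  by_contra hyU
  exact hc x hx y hy hyU e

theorem reach_conn {G : SimpleGraph V} {X : Set V} {r : V} :
    Conn G (reach G X r) r := by
  intro U hU hne hrU
  obtain ⟨u, hu⟩ := hne
  exact edge_out hu hrU (reach_path (hU hu)).symm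

theorem Conn.path {G : SimpleGraph V} {C : Set V} {a v : V} (h : Conn G C a) (ha : a ∈ C)
    (hv : v ∈ C) : LP G C a v 0 := by
  by_contra hc
  obtain ⟨x, hx, y, hy, hyU, e⟩ := h (C \ reach G C a) Set.sdiff_subset ⟨v, hv, hc⟩
    (fun h => h.2 (reach_self ha))
  have hy' : y ∈ reach G C a := by
    by_contra h; exact hyU ⟨hy, h⟩
  exact hx.2 (reach_step hy' hx.1 e.symm)

end Helpers

section Helpers

variable {V : Type*}

theorem menger2 [Finite V] {G : SimpleGraph V} (p q : V) : ∀ (N : ℕ) (X : Set V) (u v : V),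
    X.ncard ≤ N → u ∈ X → v ∈ X →
    (∀ U ⊆ X, ∀ t, (u ∈ U ∨ u = t) → (v ∈ U ∨ v = t) → p ∉ U → q ∉ U → ¬ Cl G X U t) →
    ∃ P Q : Set V, P ⊆ X ∧ Q ⊆ X ∧ (∀ w ∈ P, w ∉ Q) ∧
      ((LP G P u p 0 ∧ LP G Q v q 0) ∨ (LP G P u q 0 ∧ LP G Q v p 0)) := by
  intro N
  induction N with
  | zero =>
    intro X u v hN hu
    have : X = ∅ := by
      rw [← Set.ncard_eq_zero]; omega
    rw [this] at hu
    exact hu.elim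
  | succ N ih =>
    intro X u v hN hu hv H
    have huv : u ≠ v := by
      rintro rfl
      exact H ∅ (Set.empty_subset _) u (Or.inr rfl) (Or.inr rfl) (by simp) (by simp)
        (fun x hx => hx.elim)
    have base : ∀ r : V, (u = p ∨ u = q) → (r = p ∨ r = q) → (u = p → r = q) → (u = q → r = p) →
        LP G (X \ {u}) v r 0 := by
      intro r h1 h2 h3 h4
      by_contra hc
      refine H (reach G (X \ {u}) v) (fun w hw => (reach_sub hw).1) u (Or.inr rfl)
        (Or.inl (reach_self ⟨hv, fun h => huv h.symm⟩)) ?_ ?_ ?_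
      · intro hp
        rcases h1 with rfl | rfl
        · exact (reach_sub hp).2 rfl
        · exact hc (h4 rfl ▸ hp)
      · intro hp
        rcases h1 with rfl | rfl
        · exact hc (h3 rfl ▸ hp)
        · exact (reach_sub hp).2 rfl
      · intro x hx y hy e
        by_cases hyu : y = u
        · exact Or.inr hyu
        · exact Or.inl (reach_step hx ⟨hy, hyu⟩ e)
    by_cases hup : u = p
    · by_cases huq : u = q
      · exfalso
        have hh := base p (Or.inl hup) (Or.inl rfl) (fun _ => hup ▸ huq) (fun _ => rfl)
        exact hh.right_mem.2 hup.symm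
      · refine ⟨{u}, X \ {u}, by simpa using hu, Set.sdiff_subset, ?_, Or.inl ⟨?_, ?_⟩⟩
        · intro w hw hw'; exact hw'.2 hw
        · rw [← hup]; exact LP.refl G rfl
        · exact base q (Or.inl hup) (Or.inr rfl) (fun _ => rfl) (fun h => absurd h huq)
    by_cases huq : u = q
    · refine ⟨{u}, X \ {u}, by simpa using hu, Set.sdiff_subset, ?_, Or.inr ⟨?_, ?_⟩⟩
      · intro w hw hw'; exact hw'.2 hw
      · rw [← huq]; exact LP.refl G rfl
      · exact base p (Or.inr huq) (Or.inl rfl) (fun h => absurd h hup) (fun _ => rfl)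
    -- tight pairs
    let T : Set (Set V × V) := {c | c.1 ⊆ X \ {u} ∧ (v ∈ c.1 ∨ v = c.2) ∧ p ∉ c.1 ∧ q ∉ c.1 ∧
      Cl G (X \ {u}) c.1 c.2}
    have hTne : T.Nonempty := ⟨(∅, v), Set.empty_subset _, Or.inr rfl, by simp, by simp,
      fun x hx => hx.elim⟩
    obtain ⟨⟨U, t⟩, ⟨hUX, hvU, hpU, hqU, hcl⟩, hmax⟩ :=
      Set.exists_max_image T (fun c => (insert c.2 c.1).ncard) (Set.toFinite T) hTne
    simp only at hUX hvU hpU hqU hcl hmax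
    have hmax' : ∀ U' t', (U', t') ∈ T → insert t U ⊆ insert t' U' →
        ∀ x ∈ insert t' U', x ∈ insert t U := by
      intro U' t' h hsub x hx
      have := Set.eq_of_subset_of_ncard_le hsub (hmax _ h) (Set.toFinite _)
      rw [this]; exact hx
    -- the neighbour
    have hex : ∃ u' ∈ X, u' ∉ U ∧ u' ≠ t ∧ u' ≠ u ∧ G.Adj u u' := by
      by_contra hc
      push Not at hc
      refine H (insert u U) ?_ t (Or.inl (Or.inl rfl)) ?_ ?_ ?_ ?_
      · intro w hw
        rcases hw with rfl | hw
        · exact hu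
        · exact (hUX hw).1
      · rcases hvU with h | h
        · exact Or.inl (Or.inr h)
        · exact Or.inr h
      · rintro (h | h)
        · exact hup h.symm
        · exact hpU h
      · rintro (h | h)
        · exact huq h.symm
        · exact hqU h
      · intro x hx y hy e
        by_cases hyu : y = u
        · exact Or.inl (Or.inl hyu)
        rcases hx with rfl | hx
        · by_contra hh
          push Not at hh
          exact hc y hy (fun h => hh.1 (Or.inr h)) hh.2 hyu e
        · rcases hcl x hx y ⟨hy, hyu⟩ e with h | h
          · exact Or.inl (Or.inr h)
          · exact Or.inr h
    obtain ⟨u', hu'X, hu'U, hu't, hu'u, e⟩ := hex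
    have hN' : (X \ {u}).ncard ≤ N := by
      have := Set.ncard_sdiff_singleton_add_one hu (Set.toFinite X)
      omega
    obtain ⟨P, Q, hP, hQ, hd, hpaths⟩ := ih (X \ {u}) u' v hN' ⟨hu'X, hu'u⟩
      ⟨hv, fun h => huv h.symm⟩ (by
      intro U' hU'X t' hu' hv' hp' hq' hcl'
      by_cases ht' : t' ∈ insert t U
      · -- union minus t
        have hmem : ((U ∪ U') \ {t}, t) ∈ T := by
          refine ⟨?_, ?_, ?_, ?_, ?_⟩
          · rintro w ⟨hw | hw, _⟩
            · exact hUX hw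
            · exact hU'X hw
          · by_cases hvt : v = t
            · exact Or.inr hvt
            · rcases hvU with h | h
              · exact Or.inl ⟨Or.inl h, hvt⟩
              · exact absurd h hvt
          · rintro ⟨h | h, _⟩
            · exact hpU h
            · exact hp' h
          · rintro ⟨h | h, _⟩
            · exact hqU h
            · exact hq' h
          · rintro x ⟨hx | hx, hxt⟩ y hy e'
            · by_cases hyt : y = t
              · exact Or.inr hyt
              rcases hcl x hx y hy e' with h | h
              · exact Or.inl ⟨Or.inl h, hyt⟩
              · exact absurd h hyt
            · by_cases hyt : y = t
              · exact Or.inr hyt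
              rcases hcl' x hx y hy e' with h | h
              · exact Or.inl ⟨Or.inr h, hyt⟩
              · rw [h] at hyt ⊢
                rcases ht' with h' | h'
                · exact absurd h' hyt
                · exact Or.inl ⟨Or.inl h', hyt⟩
        have hu'' : u' ∈ U' := by
          rcases hu' with h | h
          · exact h
          · rw [← h] at ht'
            rcases ht' with h' | h'
            · exact absurd h' hu't
            · exact absurd h' hu'U
        have := hmax' _ _ hmem (by
          intro w hw
          by_cases hwt : w = t
          · exact Or.inl hwt
          · rcases hw with h | h
            · exact Or.inl h
            · exact Or.inr ⟨Or.inl h, hwt⟩) u' (Or.inr ⟨Or.inr hu'', hu't⟩)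
        rcases this with h | h
        · exact hu't h
        · exact hu'U h
      · have ht'1 : t' ≠ t := fun h => ht' (Or.inl h)
        have ht'2 : t' ∉ U := fun h => ht' (Or.inr h)
        by_cases htU' : t ∈ U'
        · have hmem : ((U ∪ U') \ {t'}, t') ∈ T := by
            refine ⟨?_, ?_, ?_, ?_, ?_⟩
            · rintro w ⟨hw | hw, _⟩
              · exact hUX hw
              · exact hU'X hw
            · by_cases hvt : v = t'
              · exact Or.inr hvt
              · rcases hv' with h | h
                · exact Or.inl ⟨Or.inr h, hvt⟩
                · exact absurd h hvt
            · rintro ⟨h | h, _⟩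
              · exact hpU h
              · exact hp' h
            · rintro ⟨h | h, _⟩
              · exact hqU h
              · exact hq' h
            · rintro x ⟨hx | hx, hxt⟩ y hy e'
              · by_cases hyt : y = t'
                · exact Or.inr hyt
                rcases hcl x hx y hy e' with h | h
                · exact Or.inl ⟨Or.inl h, hyt⟩
                · exact Or.inl ⟨Or.inr (h ▸ htU'), hyt⟩
              · by_cases hyt : y = t'
                · exact Or.inr hyt
                rcases hcl' x hx y hy e' with h | h
                · exact Or.inl ⟨Or.inr h, hyt⟩
                · exact absurd h hyt
          have := hmax' _ _ hmem (by
            intro w hw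
            rcases hw with h | h
            · rw [h]; exact Or.inr ⟨Or.inr htU', fun h => ht'1 h.symm⟩
            · exact Or.inr ⟨Or.inl h, fun h' => ht'2 (h' ▸ h)⟩) t' (Or.inl rfl)
          exact ht' this
        · have hvUU : v ∈ U ∩ U' := by
            rcases hvU with h | h <;> rcases hv' with h' | h'
            · exact ⟨h, h'⟩
            · exact absurd (h' ▸ h) ht'2
            · exact absurd (h ▸ h') htU'
            · exact absurd (h' ▸ h) ht'1
          refine H (U ∩ U') (fun w hw => (hUX hw.1).1) u (Or.inr rfl) (Or.inl hvUU)
            (fun h => hpU h.1) (fun h => hqU h.1) ?_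
          intro x hx y hy e'
          by_cases hyu : y = u
          · exact Or.inr hyu
          rcases hcl x hx.1 y ⟨hy, hyu⟩ e' with h | h <;>
            rcases hcl' x hx.2 y ⟨hy, hyu⟩ e' with h' | h'
          · exact Or.inl ⟨h, h'⟩
          · exact absurd (h' ▸ h) ht'2
          · exact absurd (h ▸ h') htU'
          · exact absurd (h' ▸ h) ht'1)
    have huP : u ∉ P := fun h => (hP h).2 rfl
    refine ⟨insert u P, Q, ?_, fun w hw => (hQ hw).1, ?_, ?_⟩
    · intro w hw
      rcases hw with rfl | hw
      · exact hu
      · exact (hP hw).1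
    · rintro w (rfl | hw) hw'
      · exact (hQ hw').2 rfl
      · exact hd w hw hw'
    · rcases hpaths with ⟨h1, h2⟩ | ⟨h1, h2⟩
      · exact Or.inl ⟨(LP.cons e h1 huP).mono subset_rfl (by omega), h2⟩
      · exact Or.inr ⟨(LP.cons e h1 huP).mono subset_rfl (by omega), h2⟩

end Helpers

section Helpers

variable {V : Type*}

structure EP (G : SimpleGraph V) (C : Set V) (a : V) (K : Set V) (c : V) : Prop where
  sub : K ⊆ C
  ne : K.Nonempty
  root : a ∉ K
  cC : c ∈ C
  cK : c ∉ K
  cl : Cl G C K c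
  min : ∀ U ⊆ K, U.Nonempty → U ≠ K → ∀ t, ¬ Cl G C U t

theorem EP.good1 {G : SimpleGraph V} {C K : Set V} {a c x : V} (h : EP G C a K c)
    (hx : x ∈ K) : Good G (insert c K) c x := by
  intro U hU hne hc hxU t hcl
  have hUK : U ⊆ K := by
    intro w hw
    rcases hU hw with h' | h'
    · exact absurd (h' ▸ hw) hc
    · exact h'
  refine h.min U hUK hne (fun h' => hxU (h' ▸ hx)) t ?_
  intro w hw y hy e
  refine hcl w hw y ?_ e
  rcases h.cl w (hUK hw) y hy e with h' | h'
  · exact Or.inr h'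
  · exact Or.inl h'

theorem EP.good2 {G : SimpleGraph V} {C K : Set V} {a c x y : V} (hC : Conn G C a)
    (h : EP G C a K c)
    (hx : x ∈ K) (hy : y ∈ K) (hxy : x ≠ y) : Good G (insert c K) x y := by
  intro U hU hne hxU hyU t hcl
  by_cases hc : c ∈ U
  · have hW : ∀ w, w ∈ (K \ U) \ {t} ↔ w ∈ K ∧ w ∉ U ∧ w ≠ t := by
      intro w; simp [and_assoc]
    refine h.min ((K \ U) \ {t}) (fun w hw => hw.1.1) ?_ ?_ t ?_
    · by_cases hxt : x = t
      · exact ⟨y, (hW y).2 ⟨hy, hyU, fun h => hxy (hxt.trans h.symm)⟩⟩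
      · exact ⟨x, (hW x).2 ⟨hx, hxU, hxt⟩⟩
    · intro heq
      obtain ⟨k, hk, w, hw, hwK, e⟩ := hC K h.sub h.ne h.root
      have hwc : w = c := by
        rcases h.cl k hk w hw e with h' | h'
        · exact absurd h' hwK
        · exact h'
      rw [hwc] at e
      have hk' := (hW k).1 (by rw [heq]; exact hk)
      rcases hcl c hc k (Or.inr hk) e.symm with h' | h'
      · exact hk'.2.1 h'
      · exact hk'.2.2 h'
    · intro w hw v hv e
      have hw' := (hW w).1 hw
      have hvK : v ∈ insert c K := by
        rcases h.cl w hw'.1 v hv e with h' | h'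
        · exact Or.inr h'
        · exact Or.inl h'
      have hvU : v ∉ U := by
        intro hvU
        rcases hcl v hvU w (Or.inr hw'.1) e.symm with h' | h'
        · exact hw'.2.1 h'
        · exact hw'.2.2 h'
      rcases hvK with h' | h'
      · exact absurd (h' ▸ hc) hvU
      · by_cases hvt : v = t
        · exact Or.inr hvt
        · exact Or.inl ((hW v).2 ⟨h', hvU, hvt⟩)
  · have hUK : U ⊆ K := by
      intro w hw
      rcases hU hw with h' | h'
      · exact absurd (h' ▸ hw) hc
      · exact h'
    refine h.min U hUK hne (fun h' => hxU (h' ▸ hx)) t ?_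
    intro w hw y hy e
    refine hcl w hw y ?_ e
    rcases h.cl w (hUK hw) y hy e with h' | h'
    · exact Or.inr h'
    · exact Or.inl h'

theorem EP.path {G : SimpleGraph V} {C K : Set V} {a c : V} (hC : Conn G C a) (ha : a ∈ C)
    (h : EP G C a K c) : LP G (C \ K) a c 0 := by
  have haR : a ∈ reach G (C \ K) a := reach_self ⟨ha, h.root⟩
  obtain ⟨k, hk⟩ := h.ne
  obtain ⟨x, hx, y, hy, hyU, e⟩ := hC (C \ reach G (C \ K) a) Set.sdiff_subset
    ⟨k, h.sub hk, fun h' => (reach_sub h').2 hk⟩ (fun h' => h'.2 haR)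
  have hyR : y ∈ reach G (C \ K) a := by
    by_contra h'; exact hyU ⟨hy, h'⟩
  have hxK : x ∈ K := by
    by_contra hxK
    exact hx.2 (reach_step hyR ⟨hx.1, hxK⟩ e.symm)
  rcases h.cl x hxK y hy e with h' | h'
  · exact absurd h' (reach_sub hyR).2
  · rw [← h']; exact hyR

/-- existence of an end piece inside a tight set -/
theorem exists_EP [Finite V] {G : SimpleGraph V} {C W : Set V} {a s : V} (hC : Conn G C a)
    (hW : W ⊆ C) (hne : W.Nonempty) (haW : a ∉ W) (hcl : Cl G C W s) :
    ∃ K c, K ⊆ W ∧ EP G C a K c := by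
  let T : Set (Set V) := {K | K ⊆ W ∧ K.Nonempty ∧ ∃ s, Cl G C K s}
  obtain ⟨K, ⟨hKW, hKne, c, hc⟩, hmin⟩ :=
    Set.exists_min_image T (fun c => c.ncard) (Set.toFinite T) ⟨W, subset_rfl, hne, s, hcl⟩
  obtain ⟨x, hx, y, hy, hyK, e⟩ := hC K (hKW.trans hW) hKne (fun h => haW (hKW h))
  have hyc : y = c := by
    rcases hc x hx y hy e with h | h
    · exact absurd h hyK
    · exact h
  subst hyc
  refine ⟨K, y, hKW, hKW.trans hW, hKne, fun h => haW (hKW h), hy, hyK, hc, ?_⟩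
  intro U hU hUne hUK t ht
  have h1 := hmin U ⟨hU.trans hKW, hUne, t, ht⟩
  exact hUK (Set.eq_of_subset_of_ncard_le hU h1 (Set.toFinite _))

/-- the lowest cut vertex -/
theorem exists_low [Finite V] {G : SimpleGraph V} {D : Set V} {b : V} (hD : Conn G D b)
    (hb : b ∈ D) (hne : ∃ v ∈ D, v ≠ b) :
    ∃ w ∈ D, ∃ B Q : Set V, B.Nonempty ∧ B ⊆ D ∧ Q ⊆ D ∧ w ∉ B ∧ w ∉ Q ∧ (∀ v ∈ B, v ∉ Q) ∧
      (∀ v ∈ D, v = w ∨ v ∈ B ∨ v ∈ Q) ∧ (∀ v ∈ Q, LP G Q v b 0) ∧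
      (LP G (insert w Q) w b 0) ∧ ∀ v ∈ B, ∃ L ⊆ B, v ∈ L ∧ EP G D b L w := by
  let Beh : V → Set V := fun w => {v | v ∈ D ∧ v ≠ w ∧ ¬ LP G (D \ {w}) v b 0}
  have hBb : (Beh b).Nonempty := by
    obtain ⟨v, hv, hvb⟩ := hne
    exact ⟨v, hv, hvb, fun h => h.right_mem.2 rfl⟩
  obtain ⟨w, ⟨hwD, hwne⟩, hmin⟩ := Set.exists_min_image {w | w ∈ D ∧ (Beh w).Nonempty}
    (fun w => (Beh w).ncard) (Set.toFinite _) ⟨b, hb, hBb⟩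
  let Q : Set V := {v | LP G (D \ {w}) v b 0}
  have hQD : ∀ v ∈ Q, v ∈ D ∧ v ≠ w := by
    intro v hv
    have h : v ∈ D \ {w} := LP.left_mem (show LP G (D \ {w}) v b 0 from hv)
    exact ⟨h.1, h.2⟩
  have hcov : ∀ v ∈ D, v = w ∨ v ∈ Beh w ∨ v ∈ Q := by
    intro v hv
    by_cases h1 : v = w
    · exact Or.inl h1
    by_cases h2 : v ∈ Q
    · exact Or.inr (Or.inr h2)
    · exact Or.inr (Or.inl ⟨hv, h1, h2⟩)
  have hQpath : ∀ v ∈ Q, LP G Q v b 0 := fun v hv => LP.self_reach hv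
  have hwpath : LP G (insert w Q) w b 0 := by
    by_cases hwb : w = b
    · rw [hwb]; exact LP.refl G (Or.inl rfl)
    · have hbQ : b ∈ Q := LP.refl G ⟨hb, fun h => hwb h.symm⟩
      obtain ⟨x, hx, y, hy, hyU, e⟩ := hD (D \ Q) Set.sdiff_subset
        ⟨w, hwD, fun h => (hQD w h).2 rfl⟩ (fun h => h.2 hbQ)
      have hyQ : y ∈ Q := by
        by_contra h'; exact hyU ⟨hy, h'⟩
      have hxw : x = w := by
        by_contra hxw
        exact hx.2 (LP.trans0 (LP.adj0 ⟨hx.1, hxw⟩ (hQD y hyQ) e) hyQ)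
      rw [hxw] at e
      exact (LP.cons e (hQpath y hyQ) (fun h => (hQD w h).2 rfl)).mono subset_rfl (by omega)
  refine ⟨w, hwD, Beh w, Q, hwne, fun v hv => hv.1, fun v hv => (hQD v hv).1,
    fun h => h.2.1 rfl, fun h => (hQD w h).2 rfl, fun v hv hv' => hv.2.2 hv', hcov, hQpath,
    hwpath, ?_⟩
  intro v hv
  have hvL : v ∈ reach G (D \ {w}) v := reach_self ⟨hv.1, hv.2.1⟩
  have hLB : reach G (D \ {w}) v ⊆ Beh w := by
    intro x hx
    exact ⟨(reach_sub hx).1, (reach_sub hx).2, fun h => hv.2.2 (LP.trans0 hx h)⟩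
  have hbL : b ∉ reach G (D \ {w}) v := fun h => hv.2.2 h
  refine ⟨reach G (D \ {w}) v, hLB, hvL, fun x hx => (reach_sub hx).1, ⟨v, hvL⟩, hbL, hwD,
    fun h => (reach_sub h).2 rfl, ?_, ?_⟩
  · intro x hx y hy e
    by_cases hyw : y = w
    · exact Or.inr hyw
    · exact Or.inl (reach_step hx ⟨hy, hyw⟩ e)
  · intro U hU hUne hUL t hcl
    obtain ⟨u, hu⟩ := hUne
    obtain ⟨x, hxL, hxU⟩ : ∃ x ∈ reach G (D \ {w}) v, x ∉ U := by
      by_contra hc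
      push Not at hc
      exact hUL (hU.antisymm hc)
    obtain ⟨x', hx', y, hy, hyU, e⟩ := edge_out hu hxU (reach_path2 (hU hu) hxL)
    have hyt : y = t := by
      rcases hcl x' hx' y (reach_sub hy).1 e with h | h
      · exact absurd h hyU
      · exact h
    subst hyt
    have hyB := hLB hy
    have hbU : b ∉ U := fun h => hbL (hU h)
    have huB : u ∈ Beh y := by
      refine ⟨(reach_sub (hU hu)).1, fun h => hyU (h ▸ hu), fun h => hbU ?_⟩
      refine closed_reach (X := D \ {y}) ?_ hu h
      intro p hp q hq e'
      rcases hcl p hp q hq.1 e' with h | h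
      · exact h
      · exact absurd h hq.2
    have hsub : Beh y ⊆ Beh w := by
      intro p hp
      rcases hcov p hp.1 with h | h | h
      · exfalso
        rw [h] at hp
        refine hp.2.2 (hwpath.mono ?_ le_rfl)
        rintro q (hq | hq)
        · exact ⟨hq ▸ hwD, fun h' => hyB.2.1 (h'.symm.trans hq)⟩
        · exact ⟨(hQD q hq).1, fun h' => hyB.2.2 (show y ∈ Q from h' ▸ hq)⟩
      · exact h
      · exfalso
        refine hp.2.2 ((hQpath p h).mono ?_ le_rfl)
        intro q hq
        exact ⟨(hQD q hq).1, fun h' => hyB.2.2 (show y ∈ Q from h' ▸ hq)⟩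
    have hle := hmin y ⟨hyB.1, ⟨u, huB⟩⟩
    have := Set.eq_of_subset_of_ncard_le hsub hle (Set.toFinite _)
    have hyy : y ∈ Beh y := by rw [this]; exact hyB
    exact hyy.2.1 rfl

theorem core [Finite V] {H : SimpleGraph V} {C D : Set V} {a b : V} {M : ℕ} (hM : 1 ≤ M)
    (hdis : ∀ v ∈ C, v ∉ D) (ha : a ∈ C) (hb : b ∈ D)
    (hC : Conn H C a) (hD : Conn H D b) (hDne : ∃ v ∈ D, v ≠ b)
    (huniq : ∀ y ∈ D, ∀ x ∈ C, ∀ x' ∈ C, H.Adj x y → H.Adj x' y → x = x')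
    (passL1 : ∀ L c, EP H D b L c → ∀ y ∈ L, LP H (insert c L) c y M)
    (passL2 : ∀ L c, EP H D b L c → ∀ y ∈ L, ∀ y' ∈ L, y ≠ y' → LP H (insert c L) y y' M)
    (passK : ∀ K c, EP H C a K c → ∀ x ∈ K, LP H (insert c K) c x (M - 1))
    (exitL : ∀ L c, EP H D b L c → ∃ x ∈ C, ∃ x' ∈ C, x ≠ x' ∧ (∃ y ∈ L, H.Adj x y) ∧
      ∃ y ∈ L, H.Adj x' y)
    (exitK : ∀ K c, EP H C a K c → ∀ t, ∃ y ∈ D, y ≠ t ∧ ∃ x ∈ K, H.Adj x y) :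
    LP H (C ∪ D) a b (2 * M) := by
  obtain ⟨w, hwD, B, Q, hBne, hBD, hQD, hwB, hwQ, hBQ, hcov, hQpath, hwpath, hBL⟩ :=
    exists_low hD hb hDne
  have hwQD : insert w Q ⊆ D := by
    rintro v (rfl | hv)
    · exact hwD
    · exact hQD hv
  -- win case
  have win : ∀ K c L x y, EP H C a K c → EP H D b L w → L ⊆ B → x ∈ K → y ∈ L → H.Adj x y →
      LP H (C ∪ D) a b (2 * M) := by
    intro K c L x y hK hL hLB hx hy e
    have h1 : LP H C a x (0 + (M - 1)) := (hK.path hC ha).trans (passK K c hK x hx)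
      (by
        rintro v hv (h | h)
        · exact h
        · exact absurd h hv.2) Set.sdiff_subset
      (by
        rintro v (rfl | h)
        · exact hK.cC
        · exact hK.sub h)
    have h2 : LP H D y b (M + 0) := (passL1 L w hL y hy).symm.trans hwpath
      (by
        rintro v (h | h) (h' | h')
        · exact h
        · exact h
        · exact h'
        · exact absurd h' (hBQ v (hLB h)))
      (by
        rintro v (rfl | h)
        · exact hwD
        · exact hL.sub h) hwQD
    exact (h1.edge e h2 hdis (T := C ∪ D) Set.subset_union_left Set.subset_union_right).mono
      subset_rfl (by omega)
  obtain ⟨v0, hv0⟩ := hBne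
  obtain ⟨L, hLB, -, hL⟩ := hBL v0 hv0
  obtain ⟨x1, hx1, x2, hx2, hx12, ⟨y1, hy1, e1⟩, ⟨y2, hy2, e2⟩⟩ := exitL L w hL
  have hy12 : y1 ≠ y2 := by
    rintro rfl
    exact hx12 (huniq y1 (hL.sub hy1) x1 hx1 x2 hx2 e1 e2)
  -- choose W
  let T : Set (Set V) := {W | W ⊆ C ∧ a ∉ W ∧ (x1 ∈ W ∨ x2 ∈ W) ∧ ∃ s, Cl H C W s}
  have hTne : T.Nonempty := by
    refine ⟨C \ {a}, Set.sdiff_subset, fun h => h.2 rfl, ?_, a, ?_⟩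
    · by_cases h : x1 = a
      · exact Or.inr ⟨hx2, fun h' => hx12 (h.trans h'.symm)⟩
      · exact Or.inl ⟨hx1, h⟩
    · intro x hx y hy e
      by_cases h : y = a
      · exact Or.inr h
      · exact Or.inl ⟨hy, h⟩
  obtain ⟨W, ⟨hWC, haW, hxW, s, hWs⟩, hWmin⟩ :=
    Set.exists_min_image T (fun c => c.ncard) (Set.toFinite T) hTne
  have hWmin' : ∀ U ⊆ W, (x1 ∈ U ∨ x2 ∈ U) → (∃ s, Cl H C U s) → U = W := by
    intro U hU hx hs
    exact Set.eq_of_subset_of_ncard_le hU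
      (hWmin U ⟨hU.trans hWC, fun h => haW (hU h), hx, hs⟩) (Set.toFinite _)
  obtain ⟨K, c, hKW, hK⟩ := exists_EP hC hWC (by
    rcases hxW with h | h
    · exact ⟨_, h⟩
    · exact ⟨_, h⟩) haW hWs
  by_cases hx1K : x1 ∈ K
  · exact win K c L x1 y1 hK hL hLB hx1K hy1 e1
  by_cases hx2K : x2 ∈ K
  · exact win K c L x2 y2 hK hL hLB hx2K hy2 e2
  obtain ⟨y, hyD, hyw, x, hxK, e⟩ := exitK K c hK w
  rcases hcov y hyD with h | hyB | hyQ
  · exact absurd h hyw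
  · obtain ⟨L', hL'B, hyL', hL'⟩ := hBL y hyB
    exact win K c L' x y hK hL' hL'B hxK hyL' e
  -- main case
  have hnocl : ∀ U ⊆ C, U.Nonempty → a ∉ U → (∀ x ∈ U, ∀ y ∈ C, H.Adj x y → y ∈ U) → False := by
    intro U hU hne haU h
    obtain ⟨x, hx, y, hy, hyU, e⟩ := hC U hU hne haU
    exact hyU (h x hx y hy e)
  obtain ⟨P1, P2, hP1, hP2, hPd, hpaths⟩ := menger2 (G := H) a c (C \ K).ncard (C \ K) x1 x2
    le_rfl ⟨hx1, hx1K⟩ ⟨hx2, hx2K⟩ (by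
    intro U hU t hx1U hx2U haU hcU hcl'
    have hUC : U ⊆ C := fun v hv => (hU hv).1
    have hcl : Cl H C U t := by
      intro p hp q hq e'
      by_cases hqK : q ∈ K
      · rcases hK.cl q hqK p (hUC hp) e'.symm with h | h
        · exact absurd h (hU hp).2
        · exact absurd (h ▸ hp) hcU
      · exact hcl' p hp q ⟨hq, hqK⟩ e'
    have hbad : t ∈ W → s ∈ U → False := by
      intro ht hs
      refine hnocl (U ∪ W) (Set.union_subset hUC hWC) ?_ (by rintro (h | h); exacts [haU h, haW h]) ?_
      · exact ⟨t, Or.inr ht⟩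
      · rintro p (hp | hp) q hq e'
        · rcases hcl p hp q hq e' with h | h
          · exact Or.inl h
          · exact Or.inr (h ▸ ht)
        · rcases hWs p hp q hq e' with h | h
          · exact Or.inr h
          · exact Or.inl (h ▸ hs)
    by_cases hxUW : x1 ∈ U ∩ W ∨ x2 ∈ U ∩ W
    · have : U ∩ W = W := by
        refine hWmin' _ Set.inter_subset_right hxUW ?_
        by_cases ht : t ∈ W
        · refine ⟨t, ?_⟩
          intro p hp q hq e'
          rcases hcl p hp.1 q hq e' with h | h
          · rcases hWs p hp.2 q hq e' with h' | h'
            · exact Or.inl ⟨h, h'⟩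
            · exact (hbad ht (h' ▸ h)).elim
          · exact Or.inr h
        · refine ⟨s, ?_⟩
          intro p hp q hq e'
          rcases hWs p hp.2 q hq e' with h' | h'
          · rcases hcl p hp.1 q hq e' with h | h
            · exact Or.inl ⟨h, h'⟩
            · exact absurd (h ▸ h') ht
          · exact Or.inr h'
      obtain ⟨k, hk⟩ := hK.ne
      have hk' : k ∈ U ∩ W := by rw [this]; exact hKW hk
      exact (hU hk'.1).2 hk
    · push Not at hxUW
      have hkey : t ∈ W ∧ ∃ xi ∈ U, xi ∉ W := by
        rcases hxW with h | h
        · have hn : x1 ∉ U := fun h' => hxUW.1 ⟨h', h⟩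
          have ht : x1 = t := by
            rcases hx1U with h' | h'
            · exact absurd h' hn
            · exact h'
          have h2 : x2 ∈ U := by
            rcases hx2U with h' | h'
            · exact h'
            · exact absurd (ht.trans h'.symm) hx12
          exact ⟨ht ▸ h, x2, h2, fun h' => hxUW.2 ⟨h2, h'⟩⟩
        · have hn : x2 ∉ U := fun h' => hxUW.2 ⟨h', h⟩
          have ht : x2 = t := by
            rcases hx2U with h' | h'
            · exact absurd h' hn
            · exact h'
          have h2 : x1 ∈ U := by
            rcases hx1U with h' | h'
            · exact h'
            · exact absurd (h'.trans ht.symm) hx12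
          exact ⟨ht ▸ h, x1, h2, fun h' => hxUW.1 ⟨h2, h'⟩⟩
      obtain ⟨htW, xi, hxiU, hxiW⟩ := hkey
      refine hnocl (U \ W) (fun v hv => hUC hv.1) ⟨xi, hxiU, hxiW⟩ (fun h => haU h.1) ?_
      intro p hp q hq e'
      have hqW : q ∉ W := by
        intro hqW
        rcases hWs q hqW p (hUC hp.1) e'.symm with h | h
        · exact hp.2 h
        · exact hbad htW (h ▸ hp.1)
      rcases hcl p hp.1 q hq e' with h | h
      · exact ⟨h, hqW⟩
      · exact absurd (h ▸ htW) hqW)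
  have final : ∀ (P1 P2 : Set V) (x1 x2 y1 y2 : V), P1 ⊆ C \ K → P2 ⊆ C \ K →
      (∀ v ∈ P1, v ∉ P2) → LP H P1 a x1 0 → LP H P2 x2 c 0 → y1 ∈ L → y2 ∈ L → y1 ≠ y2 →
      H.Adj x1 y1 → H.Adj x2 y2 → LP H (C ∪ D) a b (2 * M) := by
    intro P1 P2 x1 x2 y1 y2 hP1 hP2 hPd h1 h2 hy1 hy2 hy12 e1 e2
    have hPL : ∀ v ∈ insert w L, v ∈ D := by
      rintro v (rfl | h)
      · exact hwD
      · exact hL.sub h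
    have s1 : LP H (P1 ∪ insert w L) a y2 (0 + 1 + M) := h1.edge e1 (passL2 L w hL y1 hy1 y2 hy2 hy12)
      (fun v hv hv' => hdis v (hP1 hv).1 (hPL v hv')) Set.subset_union_left Set.subset_union_right
    have s2 : LP H (P2 ∪ insert c K) x2 x (0 + (M - 1)) := h2.trans (passK K c hK x hxK)
      (by
        rintro v hv (h | h)
        · exact h
        · exact absurd h (hP2 hv).2) Set.subset_union_left Set.subset_union_right
    have hcP2 : c ∈ P2 := h2.right_mem
    have s2C : P2 ∪ insert c K ⊆ C := by
      rintro v (h | h | h)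
      · exact (hP2 h).1
      · exact h ▸ hK.cC
      · exact hK.sub h
    have s3 : LP H ((P2 ∪ insert c K) ∪ Q) x2 b (0 + (M - 1) + 1 + 0) := s2.edge e (hQpath y hyQ)
      (fun v hv hv' => hdis v (s2C hv) (hQD hv')) Set.subset_union_left Set.subset_union_right
    have s4 : LP H (C ∪ D) a b (0 + 1 + M + 1 + (0 + (M - 1) + 1 + 0)) := s1.edge e2.symm s3 (by
        rintro v (hv | hv) (hv' | hv')
        · rcases hv' with h | h | h
          · exact hPd v hv h
          · exact hPd v hv (h ▸ hcP2)
          · exact (hP1 hv).2 h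
        · exact hdis v (hP1 hv).1 (hQD hv')
        · exact hdis v (s2C hv') (hPL v hv)
        · rcases hv with h | h
          · exact hwQ (h ▸ hv')
          · exact hBQ v (hLB h) hv')
      (by
        rintro v (h | h)
        · exact Or.inl (hP1 h).1
        · exact Or.inr (hPL v h))
      (by
        rintro v (h | h)
        · exact Or.inl (s2C h)
        · exact Or.inr (hQD h))
    exact s4.mono subset_rfl (by omega)
  rcases hpaths with ⟨h1, h2⟩ | ⟨h1, h2⟩
  · exact final P1 P2 x1 x2 y1 y2 hP1 hP2 hPd h1.symm h2 hy1 hy2 hy12 e1 e2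
  · exact final P2 P1 x2 x1 y2 y1 hP2 hP1 (fun v h h' => hPd v h' h) h2.symm h1 hy2 hy1
      hy12.symm e2 e1

end Helpers

section Helpers

variable {V : Type*}

noncomputable def dg (G : SimpleGraph V) (S : Set V) (v : V) : ℕ := {y | y ∈ S ∧ G.Adj v y}.ncard

theorem dg_le [Finite V] {G : SimpleGraph V} {S T : Set V} {v : V}
    (h : ∀ y ∈ S, G.Adj v y → y ∈ T) : dg G S v ≤ dg G T v :=
  Set.ncard_le_ncard (fun y hy => ⟨h y hy.1 hy.2, hy.2⟩) (Set.toFinite _)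

theorem dg_le1 [Finite V] {G : SimpleGraph V} {S T : Set V} {v w : V}
    (h : ∀ y ∈ S, G.Adj v y → y ∈ T ∨ y = w) : dg G S v ≤ dg G T v + 1 := by
  refine le_trans (Set.ncard_le_ncard (t := insert w {y | y ∈ T ∧ G.Adj v y}) ?_ (Set.toFinite _))
    (Set.ncard_insert_le _ _)
  intro y hy
  rcases h y hy.1 hy.2 with h' | h'
  · exact Or.inr ⟨h', hy.2⟩
  · exact Or.inl h'

theorem dg_small1 [Finite V] {G : SimpleGraph V} {S : Set V} {v p : V}
    (h : ∀ y ∈ S, G.Adj v y → y = p) : dg G S v ≤ 1 := by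
  refine le_trans (Set.ncard_le_ncard (t := {p}) ?_ (Set.toFinite _)) (by simp)
  intro y hy
  exact h y hy.1 hy.2

theorem dg_ex1 [Finite V] {G : SimpleGraph V} {S : Set V} {v : V} (h : 2 ≤ dg G S v) (p : V) :
    ∃ y ∈ S, G.Adj v y ∧ y ≠ p := by
  by_contra hc
  push Not at hc
  have := dg_small1 hc
  omega

theorem dg_ex2 [Finite V] {G : SimpleGraph V} {S : Set V} {v : V} (h : 3 ≤ dg G S v) (p q : V) :
    ∃ y ∈ S, G.Adj v y ∧ y ≠ p ∧ y ≠ q := by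
  by_contra hc
  push Not at hc
  have h1 : dg G S v ≤ 2 := by
    refine le_trans (Set.ncard_le_ncard (t := {p, q}) ?_ (Set.toFinite _)) ((Set.ncard_insert_le p {q}).trans (by simp))
    intro y hy
    by_cases h' : y = p
    · exact Or.inl h'
    · exact Or.inr (hc y hy.1 hy.2 h')
  omega

def TF (G : SimpleGraph V) : Prop := ∀ x y w, G.Adj x y → G.Adj y w → G.Adj x w → False

def S3 (G : SimpleGraph V) (m : ℕ) (S : Set V) : Prop :=
  ∀ a b z, a ≠ b → a ∈ S → b ∈ S → Good G S a b →
    (∀ v ∈ S, v ≠ a → v ≠ b → v ≠ z → m + 2 ≤ dg G S v) →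
    (∃ v ∈ S, v ≠ a ∧ v ≠ b ∧ v ≠ z) → LP G S a b (2 ^ (m + 1))

theorem EP.deg [Finite V] {G : SimpleGraph V} {C K : Set V} {a c v : V} (h : EP G C a K c)
    (hv : v ∈ K) : dg G C v ≤ dg G (insert c K) v := by
  refine dg_le fun y hy e => ?_
  rcases h.cl v hv y hy e with h' | h'
  · exact Or.inr h'
  · exact Or.inl h'

theorem EP.nbr {G : SimpleGraph V} {C K : Set V} {a c : V} (hC : Conn G C a) (h : EP G C a K c) :
    ∃ x ∈ K, G.Adj x c := by
  obtain ⟨x, hx, y, hy, hyK, e⟩ := hC K h.sub h.ne h.root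
  rcases h.cl x hx y hy e with h' | h'
  · exact absurd h' hyK
  · exact ⟨x, hx, h' ▸ e⟩

theorem pass1 [Finite V] {G : SimpleGraph V} (htf : TF G) {m : ℕ} (IH : ∀ S, S3 G m S)
    {C K : Set V} {a c e x : V} (h : EP G C a K c)
    (hdeg : ∀ v ∈ K, v ≠ e → m + 2 ≤ dg G C v) (hx : x ∈ K) (hKe : K ≠ {e}) :
    LP G (insert c K) c x (2 ^ (m + 1)) := by
  refine IH (insert c K) c x e (fun h' => h.cK (h' ▸ hx)) (Or.inl rfl) (Or.inr hx) (h.good1 hx)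
    ?_ ?_
  · rintro v (hv | hv) hvc hvx hve
    · exact absurd hv hvc
    · exact (hdeg v hv hve).trans (h.deg hv)
  · by_contra hc
    have hK : ∀ v ∈ K, v = x ∨ v = e := by
      intro v hv
      by_contra h'
      push Not at h'
      exact hc ⟨v, Or.inr hv, fun h'' => h.cK (h'' ▸ hv), h'.1, h'.2⟩
    by_cases hxe : x = e
    · apply hKe
      ext v
      constructor
      · intro hv
        rcases hK v hv with h' | h'
        · exact h'.trans hxe
        · exact h'
      · intro hv
        rw [hv, ← hxe]; exact hx
    · have hd := hdeg x hx hxe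
      have hd2 : 2 ≤ dg G C x := by omega
      have hxn : ∀ y ∈ C, G.Adj x y → (y = e ∧ y ∈ K) ∨ y = c := by
        intro y hy e'
        rcases h.cl x hx y hy e' with h' | h'
        · rcases hK y h' with h'' | h''
          · exact absurd h''.symm e'.ne
          · exact Or.inl ⟨h'', h'⟩
        · exact Or.inr h'
      obtain ⟨y, hy, e1, hyc⟩ := dg_ex1 hd2 c
      have hye : y = e ∧ y ∈ K := by
        rcases hxn y hy e1 with h' | h'
        · exact h'
        · exact absurd h' hyc
      obtain ⟨rfl, hyK⟩ := hye
      obtain ⟨w, hw, e2, hwe⟩ := dg_ex1 hd2 y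
      have hwc : w = c := by
        rcases hxn w hw e2 with h' | h'
        · exact absurd h'.1 hwe
        · exact h'
      subst hwc
      refine h.min {y} (by simpa using hyK) ⟨y, rfl⟩ (fun h' => hxe ?_) x ?_
      · have : x ∈ ({y} : Set V) := by rw [h']; exact hx
        exact this
      · intro p hp q hq e'
        rw [Set.mem_singleton_iff] at hp
        subst hp
        rcases h.cl p hyK q hq e' with h' | h'
        · rcases hK q h' with h'' | h''
          · exact Or.inr h''
          · exact Or.inl h''
        · subst h'
          exact (htf x p q e1 e' e2).elim

theorem pass2 [Finite V] {G : SimpleGraph V} (htf : TF G) {m : ℕ} (IH : ∀ S, S3 G m S)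
    {C K : Set V} {a c x y : V} (hC : Conn G C a) (h : EP G C a K c)
    (hdeg : ∀ v ∈ K, m + 2 ≤ dg G C v) (hx : x ∈ K) (hy : y ∈ K) (hxy : x ≠ y) :
    LP G (insert c K) x y (2 ^ (m + 1)) := by
  refine IH (insert c K) x y c hxy (Or.inr hx) (Or.inr hy) (h.good2 hC hx hy hxy) ?_ ?_
  · rintro v (hv | hv) hvc hvx hve
    · exact absurd hv hve
    · exact (hdeg v hv).trans (h.deg hv)
  · by_contra hc
    have hK : ∀ v ∈ K, v = x ∨ v = y := by
      intro v hv
      by_contra h'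
      push Not at h'
      exact hc ⟨v, Or.inr hv, h'.1, h'.2, fun h'' => h.cK (h'' ▸ hv)⟩
    have hx2 : 2 ≤ dg G C x := by have := hdeg x hx; omega
    have hy2 : 2 ≤ dg G C y := by have := hdeg y hy; omega
    obtain ⟨p, hp, e1, hpc⟩ := dg_ex1 hx2 c
    have hpy : p = y := by
      rcases h.cl x hx p hp e1 with h' | h'
      · rcases hK p h' with h'' | h''
        · exact absurd h''.symm e1.ne
        · exact h''
      · exact absurd h' hpc
    subst hpy
    obtain ⟨q, hq, e2, hqc⟩ := dg_ex1 hx2 p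
    have hqc : q = c := by
      rcases h.cl x hx q hq e2 with h' | h'
      · rcases hK q h' with h'' | h''
        · exact absurd h''.symm e2.ne
        · exact absurd h'' hqc
      · exact h'
    subst hqc
    obtain ⟨r, hr, e3, hrx⟩ := dg_ex1 hy2 x
    have hrc : r = q := by
      rcases h.cl p hy r hr e3 with h' | h'
      · rcases hK r h' with h'' | h''
        · exact absurd h'' hrx
        · exact absurd h''.symm e3.ne
      · exact h'
    subst hrc
    exact htf x p r e1 e3 e2

theorem EP.congr {G H : SimpleGraph V} {C K : Set V} {a c : V}
    (hGH : ∀ x ∈ C, ∀ y ∈ C, G.Adj x y ↔ H.Adj x y) (h : EP H C a K c) : EP G C a K c := by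
  refine ⟨h.sub, h.ne, h.root, h.cC, h.cK, ?_, ?_⟩
  · intro x hx y hy e
    exact h.cl x hx y hy ((hGH x (h.sub hx) y hy).1 e)
  · intro U hU hne hUK t hcl
    refine h.min U hU hne hUK t ?_
    intro x hx y hy e
    exact hcl x hx y hy ((hGH x (h.sub (hU hx)) y hy).2 e)

theorem EP.insert_sub {G : SimpleGraph V} {C K : Set V} {a c : V} (h : EP G C a K c) :
    insert c K ⊆ C := by
  rintro v (hv | hv)
  · exact hv ▸ h.cC
  · exact h.sub hv

theorem Conn.graph_mono {G H : SimpleGraph V} {C : Set V} {a : V}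
    (hGH : ∀ x y, G.Adj x y → H.Adj x y) (h : Conn G C a) : Conn H C a := by
  intro U hU hne ha
  obtain ⟨x, hx, y, hy, hyU, e⟩ := h U hU hne ha
  exact ⟨x, hx, y, hy, hyU, hGH _ _ e⟩

theorem subdiv {G H : SimpleGraph V} {T : Set V} {a b c y0 z : V} {k : ℕ}
    (hH : ∀ x y, H.Adj x y → G.Adj x y ∨ (x = c ∧ y = y0) ∨ (x = y0 ∧ y = c))
    (hzc : G.Adj z c) (hzy : G.Adj z y0) (hzT : z ∉ T) (h : LP H T a b k) :
    LP G (insert z T) a b k := by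
  obtain ⟨p, hp, hT, hl⟩ := h
  have key : ∀ {a b : V} (p : H.Walk a b), p.IsPath → (∀ v ∈ p.support, v ∈ T) →
      ∃ q : G.Walk a b, q.IsPath ∧ (∀ v ∈ q.support, v ∈ p.support ∨
        (v = z ∧ c ∈ p.support ∧ y0 ∈ p.support)) ∧ p.length ≤ q.length := by
    intro a b p
    induction p with
    | nil => intro _ _; exact ⟨SimpleGraph.Walk.nil, by simp, by simp, by simp⟩
    | @cons u v w e p ih =>
      intro hp hT
      rw [SimpleGraph.Walk.cons_isPath_iff] at hp
      have hT' : ∀ v ∈ p.support, v ∈ T := fun v hv => hT v (by simp [hv])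
      have huT : u ∈ T := hT u (by simp)
      have huz : u ≠ z := fun h => hzT (h ▸ huT)
      obtain ⟨q, hq, hqs, hql⟩ := ih hp.1 hT'
      have huq : u ∉ q.support := by
        intro h
        rcases hqs u h with h' | h'
        · exact hp.2 h'
        · exact huz h'.1
      have hgen : (c ∈ (SimpleGraph.Walk.cons e p).support ∧
          y0 ∈ (SimpleGraph.Walk.cons e p).support) → z ∉ q.support → G.Adj u z → G.Adj z v →
          ∃ q : G.Walk u w, q.IsPath ∧
            (∀ x ∈ q.support, x ∈ (SimpleGraph.Walk.cons e p).support ∨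
            (x = z ∧ c ∈ (SimpleGraph.Walk.cons e p).support ∧
              y0 ∈ (SimpleGraph.Walk.cons e p).support)) ∧
            (SimpleGraph.Walk.cons e p).length ≤ q.length := by
        intro hcy hzq e1 e2
        refine ⟨SimpleGraph.Walk.cons e1 (SimpleGraph.Walk.cons e2 q), ?_, ?_, ?_⟩
        · rw [SimpleGraph.Walk.cons_isPath_iff, SimpleGraph.Walk.cons_isPath_iff]
          refine ⟨⟨hq, hzq⟩, ?_⟩
          rw [SimpleGraph.Walk.support_cons, List.mem_cons]
          rintro (h | h)
          · exact huz h
          · exact huq h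
        · intro x hx
          rw [SimpleGraph.Walk.support_cons, SimpleGraph.Walk.support_cons, List.mem_cons,
            List.mem_cons] at hx
          rcases hx with h | h | h
          · left; simp [h]
          · exact Or.inr ⟨h, hcy⟩
          · rcases hqs x h with h' | h'
            · left; simp [h']
            · exact Or.inr ⟨h'.1, hcy⟩
        · simp only [SimpleGraph.Walk.length_cons]; omega
      have hzp : z ∉ p.support := fun h => hzT (hT' z h)
      have hvp : v ∈ p.support := p.start_mem_support
      rcases hH u v e with h | ⟨h1, h2⟩ | ⟨h1, h2⟩
      · refine ⟨SimpleGraph.Walk.cons h q, ?_, ?_, ?_⟩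
        · rw [SimpleGraph.Walk.cons_isPath_iff]
          exact ⟨hq, huq⟩
        · intro x hx
          rw [SimpleGraph.Walk.support_cons, List.mem_cons] at hx
          rcases hx with h | h
          · left; simp [h]
          · rcases hqs x h with h' | ⟨h', h1, h2⟩
            · left; simp [h']
            · right; refine ⟨h', by simp [h1], by simp [h2]⟩
        · simp only [SimpleGraph.Walk.length_cons]; omega
      · subst h1; subst h2
        refine hgen ⟨by simp, by simp⟩ (fun h => ?_) hzc.symm hzy
        rcases hqs z h with h' | h'
        · exact hzp h'
        · exact hp.2 h'.2.1
      · subst h1; subst h2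
        refine hgen ⟨by simp, by simp⟩ (fun h => ?_) hzy.symm hzc
        rcases hqs z h with h' | h'
        · exact hzp h'
        · exact hp.2 h'.2.2
  obtain ⟨q, hq, hqs, hql⟩ := key p hp hT
  refine ⟨q, hq, fun v hv => ?_, hl.trans hql⟩
  rcases hqs v hv with h | h
  · exact Or.inr (hT v h)
  · exact Or.inl h.1

end Helpers

section Helpers

variable {V : Type*}

theorem split_step [Finite V] {G : SimpleGraph V} (htf : TF G) {m : ℕ} (IH : ∀ S, S3 G m S)
    {S C D : Set V} {a b z : V} (hab : a ≠ b)
    (hsize : ∀ T : Set V, T.ncard < S.ncard → S3 G (m + 1) T)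
    (hgood : Good G S a b)
    (hdeg : ∀ v ∈ S, v ≠ a → v ≠ b → v ≠ z → m + 3 ≤ dg G S v)
    (star : ∀ Z ⊆ S, a ∉ Z → b ∉ Z → (∃ v ∈ Z, v ≠ z) → ∀ u v, Cl2 G S Z u v →
      ∀ w ∈ S, w ∈ Z ∨ w = u ∨ w = v)
    (hS : ∀ v, v ∈ S ↔ v ∈ C ∨ v ∈ D) (hdis : ∀ v ∈ C, v ∉ D) (ha : a ∈ C) (hb : b ∈ D)
    (hC : Conn G C a) (hD : Conn G D b)
    (u1 : ∀ y ∈ D, ∀ x ∈ C, ∀ x' ∈ C, G.Adj x y → G.Adj x' y → x = x')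
    (u2 : ∀ x ∈ C, ∀ y ∈ D, ∀ y' ∈ D, G.Adj x y → G.Adj x y' → y = y')
    (hCne : ∃ v ∈ C, v ≠ a) (hDne : ∃ v ∈ D, v ≠ b) (hz : z ∉ D) :
    LP G S a b (2 * 2 ^ (m + 1)) := by
  have hCS : C ⊆ S := fun v hv => (hS v).2 (Or.inl hv)
  have hDS : D ⊆ S := fun v hv => (hS v).2 (Or.inr hv)
  have haD : a ∉ D := hdis a ha
  have hbC : b ∉ C := fun h => hdis b h hb
  have hM : 1 ≤ 2 ^ (m + 1) := Nat.one_le_two_pow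
  have hM2 : 2 ≤ 2 ^ (m + 1) := by
    rw [pow_succ]
    have : 1 ≤ 2 ^ m := Nat.one_le_two_pow
    omega
  have degC : ∀ v ∈ C, v ≠ a → v ≠ z → m + 2 ≤ dg G C v := by
    intro v hv hva hvz
    have h1 := hdeg v (hCS hv) hva (fun h => hbC (h ▸ hv)) hvz
    have h2 : ∃ w, ∀ y ∈ S, G.Adj v y → y ∈ C ∨ y = w := by
      by_cases h : ∃ w ∈ D, G.Adj v w
      · obtain ⟨w, hw, e⟩ := h
        refine ⟨w, fun y hy e' => ?_⟩
        rcases (hS y).1 hy with h | h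
        · exact Or.inl h
        · exact Or.inr (u2 v hv y h w hw e' e)
      · push Not at h
        refine ⟨a, fun y hy e' => ?_⟩
        rcases (hS y).1 hy with h' | h'
        · exact Or.inl h'
        · exact absurd e' (h y h')
    obtain ⟨w, hw⟩ := h2
    have := dg_le1 hw
    omega
  have degD : ∀ v ∈ D, v ≠ b → m + 2 ≤ dg G D v := by
    intro v hv hvb
    have h1 := hdeg v (hDS hv) (fun h => haD (h ▸ hv)) hvb (fun h => hz (h ▸ hv))
    have h2 : ∃ w, ∀ y ∈ S, G.Adj v y → y ∈ D ∨ y = w := by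
      by_cases h : ∃ w ∈ C, G.Adj v w
      · obtain ⟨w, hw, e⟩ := h
        refine ⟨w, fun y hy e' => ?_⟩
        rcases (hS y).1 hy with h | h
        · exact Or.inr (u1 v hv y h w hw e'.symm e.symm)
        · exact Or.inl h
      · push Not at h
        refine ⟨a, fun y hy e' => ?_⟩
        rcases (hS y).1 hy with h' | h'
        · exact absurd e' (h y h')
        · exact Or.inl h'
    obtain ⟨w, hw⟩ := h2
    have := dg_le1 hw
    omega
  have passL1 : ∀ L c, EP G D b L c → ∀ y ∈ L, LP G (insert c L) c y (2 ^ (m + 1)) := by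
    intro L c h y hy
    refine pass1 htf IH (e := c) h (fun v hv _ => degD v (h.sub hv) (fun h' => h.root (h' ▸ hv))) hy ?_
    intro h'
    exact h.cK (by rw [h']; rfl)
  have passL2 : ∀ L c, EP G D b L c → ∀ y ∈ L, ∀ y' ∈ L, y ≠ y' →
      LP G (insert c L) y y' (2 ^ (m + 1)) := by
    intro L c h y hy y' hy' hne
    exact pass2 htf IH hD h (fun v hv => degD v (h.sub hv) (fun h' => h.root (h' ▸ hv))) hy hy' hne
  -- one exit of an end piece on the other side
  have exit1 : ∀ L c, EP G D b L c → ∃ x ∈ C, ∃ y ∈ L, G.Adj x y := by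
    intro L c h
    by_contra hc
    push Not at hc
    refine hgood L (h.sub.trans hDS) h.ne (fun h' => haD (h.sub h')) h.root c ?_
    intro x hx y hy e
    rcases (hS y).1 hy with h' | h'
    · exact absurd e.symm (hc y h' x hx)
    · exact h.cl x hx y h' e
  have hDnot : ∀ (Z : Set V) (u v : V), Z ⊆ S → a ∉ Z → b ∉ Z → (∃ v ∈ Z, v ≠ z) →
      (∀ w ∈ D, w ∉ Z) → u ∈ C → ¬ Cl2 G S Z u v := by
    intro Z u v hZ haZ hbZ hne hZD hu hcl
    obtain ⟨w, hw, hwb⟩ := hDne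
    have h1 : b = v := by
      rcases star Z hZ haZ hbZ hne u v hcl b (hDS hb) with h | h | h
      · exact absurd h hbZ
      · exact absurd (h ▸ hu) hbC
      · exact h
    have h2 : w = v := by
      rcases star Z hZ haZ hbZ hne u v hcl w (hDS hw) with h | h | h
      · exact absurd h (hZD w hw)
      · exact absurd hw (h ▸ hdis u hu)
      · exact h
    exact hwb (h2.trans h1.symm)
  by_cases hleaf : z ∈ C ∧ z ≠ a ∧ ∃ c, Cl G C {z} c
  swap
  · -- no leaf
    have hKz : ∀ K c, EP G C a K c → K ≠ {z} := by
      intro K c h hK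
      subst hK
      exact hleaf ⟨h.sub rfl, fun h' => h.root (by rw [← h']; rfl), c, h.cl⟩
    refine (core hM hdis ha hb hC hD hDne u1 passL1 passL2 ?_ ?_ ?_).mono
      (Set.union_subset hCS hDS) le_rfl
    · intro K c h x hx
      exact (pass1 htf IH (e := z) h (fun v hv hvz => degC v (h.sub hv)
        (fun h' => h.root (h' ▸ hv)) hvz) hx (hKz K c h)).mono subset_rfl (by omega)
    · intro L c h
      obtain ⟨x1, hx1, y1, hy1, e1⟩ := exit1 L c h
      by_contra hc
      have honly : ∀ x ∈ C, ∀ y ∈ L, G.Adj x y → x = x1 := by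
        intro x hx y hy e
        by_contra hne
        exact hc ⟨x, hx, x1, hx1, hne, ⟨y, hy, e⟩, y1, hy1, e1⟩
      obtain ⟨v, hv, hva⟩ := hCne
      have hst := star L (h.sub.trans hDS) (fun h' => haD (h.sub h')) h.root
        ⟨y1, hy1, fun h' => hz (h' ▸ h.sub hy1)⟩ c x1 (by
          intro x hx y hy e
          rcases (hS y).1 hy with h' | h'
          · exact Or.inr (Or.inr (honly y h' x hx e.symm))
          · rcases h.cl x hx y h' e with h'' | h''
            · exact Or.inl h''
            · exact Or.inr (Or.inl h''))
      have hall : ∀ w ∈ C, w = x1 := by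
        intro w hw
        rcases hst w (hCS hw) with h' | h' | h'
        · exact absurd (h.sub h') (hdis w hw)
        · exact absurd h.cC (h' ▸ hdis w hw)
        · exact h'
      exact hva ((hall v hv).trans (hall a ha).symm)
    · intro K c h t
      by_contra hc
      push Not at hc
      refine hDnot K c t (h.sub.trans hCS) h.root (fun h' => hbC (h.sub h')) ?_
        (fun w hw hw' => hdis w (h.sub hw') hw) h.cC ?_
      · by_contra h'
        push Not at h'
        obtain ⟨k, hk⟩ := h.ne
        apply hKz K c h
        ext v
        exact ⟨fun hv => h' v hv, fun hv => by rw [show v = k from (h' k hk).symm ▸ hv]; exact hk⟩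
      · intro x hx y hy e
        rcases (hS y).1 hy with h' | h'
        · rcases h.cl x hx y h' e with h'' | h''
          · exact Or.inl h''
          · exact Or.inr (Or.inl h'')
        · by_cases hyt : y = t
          · exact Or.inr (Or.inr hyt)
          · exact absurd e (hc y h' hyt x hx)
  -- leaf case
  obtain ⟨hzC, hza, c, hzcl⟩ := hleaf
  have hzb : z ≠ b := fun h => hbC (h ▸ hzC)
  have hzn : ∀ t, ∃ y ∈ S, G.Adj z y ∧ y ≠ t := by
    intro t
    by_contra hc
    push Not at hc
    refine hgood {z} (by simpa using hCS hzC) ⟨z, rfl⟩ (fun h => hza h.symm) (fun h => hzb h.symm) t ?_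
    intro x hx y hy e
    rw [Set.mem_singleton_iff] at hx
    exact Or.inr (hc y hy (hx ▸ e))
  have hzC1 : ∀ y ∈ C, G.Adj z y → y = c := by
    intro y hy e
    rcases hzcl z rfl y hy e with h | h
    · exact absurd h.symm e.ne
    · exact h
  obtain ⟨y0, hy0S, ezy, hy0c⟩ := hzn c
  have hy0 : y0 ∈ D := by
    rcases (hS y0).1 hy0S with h | h
    · exact absurd (hzC1 y0 h ezy) hy0c
    · exact h
  have hzD1 : ∀ y ∈ D, G.Adj z y → y = y0 := fun y hy e => u2 z hzC y hy y0 hy0 e ezy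
  obtain ⟨c', hc'S, ezc, hc'y⟩ := hzn y0
  have hc'C : c' ∈ C := by
    rcases (hS c').1 hc'S with h | h
    · exact h
    · exact absurd (hzD1 c' h ezc) hc'y
  have hcc := hzC1 c' hc'C ezc
  subst hcc
  clear hc'y hc'S hzcl
  rename' c' => c, hc'C => hcC
  have hcz : c ≠ z := ezc.ne.symm
  by_cases hC' : ∃ v ∈ C, v ≠ a ∧ v ≠ z
  · obtain ⟨v1, hv1, hv1a, hv1z⟩ := hC'
    have hmem : ∀ v, v ∈ C \ {z} ↔ v ∈ C ∧ v ≠ z := fun v => Iff.rfl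
    have hC1 : Conn G (C \ {z}) a := by
      intro U hU hne haU
      by_cases hcU : c ∈ U
      · obtain ⟨x, hx, y, hy, hyU, e⟩ := hC (insert z U) (by
          rintro w (h | h)
          · exact h ▸ hzC
          · exact (hU h).1) ⟨z, Or.inl rfl⟩ (by
          rintro (h | h)
          · exact hza h.symm
          · exact haU h)
        have hyz : y ≠ z := fun h => hyU (Or.inl h)
        have hyU' : y ∉ U := fun h => hyU (Or.inr h)
        rcases hx with h | h
        · subst h
          exact absurd (hzC1 y hy e ▸ hcU) hyU'
        · exact ⟨x, h, y, ⟨hy, hyz⟩, hyU', e⟩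
      · obtain ⟨x, hx, y, hy, hyU, e⟩ := hC U (fun w hw => (hU hw).1) hne haU
        refine ⟨x, hx, y, ⟨hy, ?_⟩, hyU, e⟩
        intro h
        have h : y = z := h
        subst h
        exact hcU (hzC1 x (hU hx).1 e.symm ▸ hx)
    obtain ⟨H, hH⟩ : ∃ H : SimpleGraph V, ∀ x y, H.Adj x y ↔
        G.Adj x y ∨ (x = c ∧ y = y0) ∨ (x = y0 ∧ y = c) := by
      refine ⟨⟨fun x y => G.Adj x y ∨ (x = c ∧ y = y0) ∨ (x = y0 ∧ y = c), ?_, ?_⟩, fun x y => Iff.rfl⟩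
      · refine ⟨fun x y h => ?_⟩
        rcases h with h | h | h
        · exact Or.inl h.symm
        · exact Or.inr (Or.inr ⟨h.2, h.1⟩)
        · exact Or.inr (Or.inl ⟨h.2, h.1⟩)
      · refine ⟨fun x h => ?_⟩
        rcases h with h | h | h
        · exact h.ne rfl
        · exact hy0c (h.2.symm.trans h.1)
        · exact hy0c (h.1.symm.trans h.2)
    have hcD : c ∉ D := hdis c hcC
    have hy0C : y0 ∉ C := fun h => hdis y0 h hy0
    have hHG : ∀ x y, G.Adj x y → H.Adj x y := fun x y e => (hH x y).2 (Or.inl e)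
    have hGHC : ∀ x ∈ C \ {z}, ∀ y ∈ C \ {z}, G.Adj x y ↔ H.Adj x y := by
      intro x hx y hy
      refine ⟨hHG x y, fun h => ?_⟩
      rcases (hH x y).1 h with h | h | h
      · exact h
      · exact absurd (h.2 ▸ hy.1) hy0C
      · exact absurd (h.1 ▸ hx.1) hy0C
    have hGHD : ∀ x ∈ D, ∀ y ∈ D, G.Adj x y ↔ H.Adj x y := by
      intro x hx y hy
      refine ⟨hHG x y, fun h => ?_⟩
      rcases (hH x y).1 h with h | h | h
      · exact h
      · exact absurd (h.1 ▸ hx) hcD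
      · exact absurd (h.2 ▸ hy) hcD
    have haz : a ∈ C \ {z} := ⟨ha, fun h => hza h.symm⟩
    have hfin : LP H ((C \ {z}) ∪ D) a b (2 * 2 ^ (m + 1)) := by
      refine core hM (fun v hv => hdis v hv.1) haz hb (hC1.graph_mono hHG) (hD.graph_mono hHG) hDne
        ?_ ?_ ?_ ?_ ?_ ?_
      · intro y hy x hx x' hx' e e'
        rcases (hH x y).1 e with h | h | h
        · rcases (hH x' y).1 e' with h' | h' | h'
          · exact u1 y hy x hx.1 x' hx'.1 h h'
          · exact absurd (u1 y hy x hx.1 z hzC h (h'.2 ▸ ezy)) hx.2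
          · exact absurd (h'.1 ▸ hx'.1) hy0C
        · rcases (hH x' y).1 e' with h' | h' | h'
          · exact absurd (u1 y hy x' hx'.1 z hzC h' (h.2 ▸ ezy)) hx'.2
          · exact h.1.trans h'.1.symm
          · exact absurd (h'.1 ▸ hx'.1) hy0C
        · exact absurd (h.1 ▸ hx.1) hy0C
      · intro L w h y hy
        exact LP.graph_mono (fun x _ y _ e => hHG x y e) (passL1 L w (h.congr hGHD) y hy)
      · intro L w h y hy y' hy' hne
        exact LP.graph_mono (fun x _ y _ e => hHG x y e) (passL2 L w (h.congr hGHD) y hy y' hy' hne)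
      · intro K w h x hx
        have h := h.congr hGHC
        refine LP.graph_mono (fun x _ y _ e => hHG x y e) ?_
        by_cases hKc : K = {c}
        · have hcK : c ∈ K := by rw [hKc]; rfl
          have d1 := degC c hcC (fun h' => h.root (h' ▸ hcK)) hcz
          have d2 : dg G C c ≤ dg G (C \ {z}) c + 1 := by
            refine dg_le1 (w := z) fun y hy e => ?_
            by_cases hyz : y = z
            · exact Or.inr hyz
            · exact Or.inl ⟨hy, hyz⟩
          have d3 : dg G (C \ {z}) c ≤ 1 := by
            refine dg_small1 (p := w) fun y hy e => ?_
            rcases h.cl c hcK y hy e with h' | h'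
            · rw [hKc] at h'
              exact absurd h'.symm e.ne
            · exact h'
          have hm : m = 0 := by omega
          obtain ⟨k, hk, ek⟩ := h.nbr hC1
          have hxk : x = k := by
            rw [hKc] at hx hk
            exact hx.trans hk.symm
          subst hxk
          have := (LP.refl G (show x ∈ K from hx)).cons ek.symm h.cK
          exact this.mono subset_rfl (by subst hm; simp)
        · refine (pass1 htf IH (e := c) h ?_ hx hKc).mono subset_rfl (by omega)
          intro v hv hvc
          refine (degC v (h.sub hv).1 (fun h' => h.root (h' ▸ hv)) (h.sub hv).2).trans ?_
          refine dg_le fun y hy e => ⟨hy, fun hyz => hvc ?_⟩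
          have hyz : y = z := hyz
          subst hyz
          exact hzC1 v (h.sub hv).1 e.symm
      · intro L w h
        have h := h.congr hGHD
        have hzL : z ∉ L := fun h' => hz (h.sub h')
        obtain ⟨l, hl⟩ := h.ne
        have hlz : l ≠ z := fun h' => hzL (h' ▸ hl)
        by_cases hyL : y0 ∈ L
        · by_contra hc
          have honly : ∀ x ∈ C, x ≠ z → ∀ y ∈ L, G.Adj x y → x = c := by
            intro x hx hxz y hy e
            by_contra hne
            exact hc ⟨x, ⟨hx, hxz⟩, c, ⟨hcC, hcz⟩, hne, ⟨y, hy, hHG _ _ e⟩, y0, hyL,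
              (hH _ _).2 (Or.inr (Or.inl ⟨rfl, rfl⟩))⟩
          have hst := star (insert z L) (by
              rintro v (h' | h')
              · exact h' ▸ hCS hzC
              · exact hDS (h.sub h')) (by
              rintro (h' | h')
              · exact hza h'.symm
              · exact haD (h.sub h')) (by
              rintro (h' | h')
              · exact hzb h'.symm
              · exact h.root h') ⟨l, Or.inr hl, hlz⟩ w c (by
              rintro x (hx | hx) y hy e
              · subst hx
                rcases (hS y).1 hy with h' | h'
                · exact Or.inr (Or.inr (hzC1 y h' e))
                · exact Or.inl (Or.inr (hzD1 y h' e ▸ hyL))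
              · rcases (hS y).1 hy with h' | h'
                · by_cases hyz : y = z
                  · exact Or.inl (Or.inl hyz)
                  · exact Or.inr (Or.inr (honly y h' hyz x hx e.symm))
                · rcases h.cl x hx y h' e with h'' | h''
                  · exact Or.inl (Or.inr h'')
                  · exact Or.inr (Or.inl h''))
          have hall : ∀ v ∈ C, v ≠ z → v = c := by
            intro v hv hvz
            rcases hst v (hCS hv) with (h' | h') | h' | h'
            · exact absurd h' hvz
            · exact absurd (h.sub h') (hdis v hv)
            · exact absurd h.cC (h' ▸ hdis v hv)
            · exact h'
          exact hv1a ((hall v1 hv1 hv1z).trans (hall a ha hza.symm).symm)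
        · obtain ⟨x1, hx1, y1, hy1, e1⟩ := exit1 L w h
          have hnz : ∀ x y, y ∈ L → G.Adj x y → x ≠ z := by
            intro x y hy e hxz
            subst hxz
            exact hyL (hzD1 y (h.sub hy) e ▸ hy)
          by_contra hc
          have honly : ∀ x ∈ C, ∀ y ∈ L, G.Adj x y → x = x1 := by
            intro x hx y hy e
            by_contra hne
            exact hc ⟨x, ⟨hx, hnz x y hy e⟩, x1, ⟨hx1, hnz x1 y1 hy1 e1⟩, hne,
              ⟨y, hy, hHG _ _ e⟩, y1, hy1, hHG _ _ e1⟩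
          have hst := star L (h.sub.trans hDS) (fun h' => haD (h.sub h')) h.root
            ⟨l, hl, hlz⟩ w x1 (by
              intro x hx y hy e
              rcases (hS y).1 hy with h' | h'
              · exact Or.inr (Or.inr (honly y h' x hx e.symm))
              · rcases h.cl x hx y h' e with h'' | h''
                · exact Or.inl h''
                · exact Or.inr (Or.inl h''))
          have hall : ∀ v ∈ C, v = x1 := by
            intro v hv
            rcases hst v (hCS hv) with h' | h' | h'
            · exact absurd (h.sub h') (hdis v hv)
            · exact absurd h.cC (h' ▸ hdis v hv)
            · exact h'
          exact hv1a ((hall v1 hv1).trans (hall a ha).symm)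
      · intro K w h t
        have h := h.congr hGHC
        have hKC : K ⊆ C := fun v hv => (h.sub hv).1
        obtain ⟨k, hk⟩ := h.ne
        have hkz : k ≠ z := (h.sub hk).2
        by_contra hc
        push Not at hc
        by_cases hcK : c ∈ K
        · have hyt : y0 = t := by
            by_contra hne
            exact hc y0 hy0 hne c hcK ((hH _ _).2 (Or.inr (Or.inl ⟨rfl, rfl⟩)))
          subst hyt
          refine hDnot (insert z K) w y0 ?_ ?_ ?_ ⟨k, Or.inr hk, hkz⟩ ?_ h.cC.1 ?_
          · rintro v (h' | h')
            · exact h' ▸ hCS hzC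
            · exact hCS (hKC h')
          · rintro (h' | h')
            · exact hza h'.symm
            · exact h.root h'
          · rintro (h' | h')
            · exact hzb h'.symm
            · exact hbC (hKC h')
          · rintro v hv (h' | h')
            · exact hz (h' ▸ hv)
            · exact hdis v (hKC h') hv
          · rintro x (hx | hx) y hy e
            · subst hx
              rcases (hS y).1 hy with h' | h'
              · exact Or.inl (Or.inr (hzC1 y h' e ▸ hcK))
              · exact Or.inr (Or.inr (hzD1 y h' e))
            · rcases (hS y).1 hy with h' | h'
              · by_cases hyz : y = z
                · exact Or.inl (Or.inl hyz)
                · rcases h.cl x hx y ⟨h', hyz⟩ e with h'' | h''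
                  · exact Or.inl (Or.inr h'')
                  · exact Or.inr (Or.inl h'')
              · by_cases hyt : y = y0
                · exact Or.inr (Or.inr hyt)
                · exact absurd (hHG _ _ e) (hc y h' hyt x hx)
        · refine hDnot K w t (hKC.trans hCS) h.root (fun h' => hbC (hKC h')) ⟨k, hk, hkz⟩
            (fun v hv h' => hdis v (hKC h') hv) h.cC.1 ?_
          intro x hx y hy e
          rcases (hS y).1 hy with h' | h'
          · by_cases hyz : y = z
            · subst hyz
              exact absurd (hzC1 x (hKC hx) e.symm ▸ hx) hcK
            · rcases h.cl x hx y ⟨h', hyz⟩ e with h'' | h''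
              · exact Or.inl h''
              · exact Or.inr (Or.inl h'')
          · by_cases hyt : y = t
            · exact Or.inr (Or.inr hyt)
            · exact absurd (hHG _ _ e) (hc y h' hyt x hx)
    refine (subdiv (fun x y h => (hH x y).1 h) ezc ezy ?_ hfin).mono ?_ le_rfl
    · rintro (h | h)
      · exact h.2 rfl
      · exact hz h
    · rintro v (h | h | h)
      · exact h ▸ hCS hzC
      · exact hCS h.1
      · exact hDS h
  · -- C = {a, z}
    have hCaz : ∀ v ∈ C, v = a ∨ v = z := by
      intro v hv
      by_contra h
      push Not at h
      exact hC' ⟨v, hv, h⟩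
    have hca : c = a := by
      rcases hCaz c hcC with h | h
      · exact h
      · exact absurd h hcz
    subst hca
    have hzS : z ∈ S := hCS hzC
    have hy0b : y0 ≠ b := by
      intro hyb
      subst hyb
      obtain ⟨w, hw, hwb⟩ := hDne
      rcases star (D \ {y0}) (fun v hv => hDS hv.1) (fun h => haD h.1) (fun h => h.2 rfl)
        ⟨w, ⟨hw, hwb⟩, fun h => hz (h ▸ hw)⟩ c y0 (by
          intro x hx y hy e
          rcases (hS y).1 hy with h' | h'
          · rcases hCaz y h' with h | h
            · exact Or.inr (Or.inl h)
            · subst h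
              exact absurd (hzD1 x hx.1 e.symm) hx.2
          · by_cases hyy : y = y0
            · exact Or.inr (Or.inr hyy)
            · exact Or.inl ⟨h', hyy⟩) z hzS with h | h | h
      · exact hz h.1
      · exact hza h
      · exact hzb h
    obtain ⟨e, he⟩ : ∃ e, ∀ y ∈ D, G.Adj c y → y = e := by
      by_cases h : ∃ e ∈ D, G.Adj c e
      · obtain ⟨e, heD, hce⟩ := h
        exact ⟨e, fun y hy h => u2 c ha y hy e heD h hce⟩
      · push Not at h
        exact ⟨b, fun y hy h' => absurd h' (h y hy)⟩
    have hgD : Good G D y0 b := by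
      intro U hU hne hyU hbU t hcl
      obtain ⟨u, hu⟩ := hne
      have hst := star U (hU.trans hDS) (fun h => haD (hU h)) hbU
        ⟨u, hu, fun h => hz (h ▸ hU hu)⟩ t c (by
          intro x hx y hy e
          rcases (hS y).1 hy with h' | h'
          · rcases hCaz y h' with h | h
            · exact Or.inr (Or.inr h)
            · subst h
              exact absurd (hzD1 x (hU hx) e.symm ▸ hx) hyU
          · rcases hcl x hx y h' e with h'' | h''
            · exact Or.inl h''
            · exact Or.inr (Or.inl h''))
      have hzt : z = t := by
        rcases hst z hzS with h | h | h
        · exact absurd (hU h) hz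
        · exact h
        · exact absurd h hza
      rcases hst y0 hy0S with h | h | h
      · exact hyU h
      · exact hz (hzt.trans h.symm ▸ hy0)
      · exact haD (h ▸ hy0)
    have hlt : D.ncard < S.ncard := by
      refine Set.ncard_lt_ncard ⟨hDS, fun h => hz (h hzS)⟩ (Set.toFinite _)
    have hmain : LP G D y0 b (2 ^ (m + 1 + 1)) := by
      refine hsize D hlt y0 b e hy0b hy0 hb hgD ?_ ?_
      · intro v hv hvy hvb hve
        refine (hdeg v (hDS hv) (fun h => haD (h ▸ hv)) hvb (fun h => hz (h ▸ hv))).trans ?_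
        refine dg_le fun y hy e' => ?_
        rcases (hS y).1 hy with h' | h'
        · rcases hCaz y h' with h | h
          · subst h
            exact absurd (he v hv e'.symm) hve
          · subst h
            exact absurd (hzD1 v hv e'.symm) hvy
        · exact h'
      · by_contra hc
        have hall : ∀ v ∈ D, v = y0 ∨ v = b ∨ v = e := by
          intro v hv
          by_contra h
          push Not at h
          exact hc ⟨v, hv, h⟩
        have hd := degD y0 hy0 hy0b
        have hd2 : 2 ≤ dg G D y0 := by omega
        obtain ⟨p, hp, e1, hpe⟩ := dg_ex1 hd2 e
        have hpb : p = b := by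
          rcases hall p hp with h | h | h
          · exact absurd h.symm e1.ne
          · exact h
          · exact absurd h hpe
        subst hpb
        obtain ⟨q, hq, e2, hqp⟩ := dg_ex1 hd2 p
        have hqe : q = e := by
          rcases hall q hq with h | h | h
          · exact absurd h.symm e2.ne
          · exact absurd h hqp
          · exact h
        subst hqe
        have hd' := degD q hq hqp
        have hd2' : 2 ≤ dg G D q := by omega
        obtain ⟨r, hr, e3, hry⟩ := dg_ex1 hd2' y0
        have hrp : r = p := by
          rcases hall r hr with h | h | h
          · exact absurd h hry
          · exact h
          · exact absurd h.symm e3.ne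
        subst hrp
        exact htf y0 q r e2 e3 e1
    have h1 := hmain.cons ezy hz
    have h2 := h1.cons ezc.symm (by
      rintro (h | h)
      · exact hza h.symm
      · exact haD h)
    refine h2.mono ?_ (by rw [pow_succ 2 (m + 1)]; omega)
    rintro v (h | h | h)
    · exact h ▸ hCS ha
    · exact h ▸ hzS
    · exact hDS h

end Helpers

section Helpers

variable {V : Type*}

def SPL (G : SimpleGraph V) : Prop := ∀ a b : V, a ≠ b → ∃ h : V → Prop, h a ∧ ¬ h b ∧
  ∀ x y y', G.Adj x y → G.Adj x y' → (h x ↔ ¬ h y) → (h x ↔ ¬ h y') → y = y'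

theorem base_case [Finite V] {G : SimpleGraph V} (S : Set V) : S3 G 0 S := by
  rintro a b z hab ha hb hgood - ⟨v, hv, hva, hvb, -⟩
  have hmem : ∀ w, w ∈ S \ {a, b} ↔ w ∈ S ∧ w ≠ a ∧ w ≠ b := by
    intro w; simp
  have hvX : v ∈ S \ {a, b} := (hmem v).2 ⟨hv, hva, hvb⟩
  let U := reach G (S \ {a, b}) v
  have hvU : v ∈ U := reach_self hvX
  have hUX : ∀ w ∈ U, w ∈ S ∧ w ≠ a ∧ w ≠ b := fun w hw => (hmem w).1 (reach_sub hw)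
  have haU : a ∉ U := fun h => (hUX a h).2.1 rfl
  have hbU : b ∉ U := fun h => (hUX b h).2.2 rfl
  have key : ∀ t, ∃ x ∈ U, ∃ y, (y = a ∨ y = b) ∧ y ≠ t ∧ G.Adj x y := by
    intro t
    by_contra hc
    push Not at hc
    refine hgood U (fun w hw => (hUX w hw).1) ⟨v, hvU⟩ haU hbU t ?_
    intro x hx y hy e
    by_cases hyab : y = a ∨ y = b
    · right
      by_contra hyt
      exact hc x hx y hyab hyt e
    · push Not at hyab
      exact Or.inl (reach_step hx ((hmem y).2 ⟨hy, hyab⟩) e)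
  obtain ⟨x, hx, y, hy, hyb, e⟩ := key b
  have hya : y = a := by
    rcases hy with h | h
    · exact h
    · exact absurd h hyb
  subst hya
  obtain ⟨x', hx', y', hy', hya, e'⟩ := key y
  have hyb : y' = b := by
    rcases hy' with h | h
    · exact absurd h hya
    · exact h
  subst hyb
  have h1 : LP G U x x' 0 := reach_path2 hx hx'
  have h2 := h1.cons e.symm haU
  have h3 := h2.edge e' (LP.refl G (S := {y'}) rfl) (T := S) (by
    rintro w (h | h) h'
    · exact hab (h.symm.trans h')
    · exact hbU (h' ▸ h)) (by
    rintro w (h | h)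
    · exact h ▸ ha
    · exact (hUX w h).1) (by rintro w h; exact h ▸ hb)
  exact h3.mono subset_rfl (by simp)

theorem deg_lem [Finite V] {G : SimpleGraph V} (htf : TF G) {m : ℕ}
    {S : Set V} {a b z : V} (hab : a ≠ b) (ha : a ∈ S)
    (hgood : Good G S a b)
    (hdeg : ∀ v ∈ S, v ≠ a → v ≠ b → v ≠ z → m + 3 ≤ dg G S v)
    (hne : ∃ v ∈ S, v ≠ a ∧ v ≠ b ∧ v ≠ z)
    (star : ∀ Z ⊆ S, a ∉ Z → b ∉ Z → (∃ v ∈ Z, v ≠ z) → ∀ u v, Cl2 G S Z u v →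
      ∀ w ∈ S, w ∈ Z ∨ w = u ∨ w = v) (a1 : V) : ∃ y ∈ S, G.Adj a y ∧ y ≠ a1 := by
  by_contra hc
  push Not at hc
  obtain ⟨v, hv, hva, hvb, hvz⟩ := hne
  by_cases haa : a = a1
  · subst haa
    refine hgood (S \ {a, b}) Set.sdiff_subset ⟨v, hv, by simp [hva, hvb]⟩ (by simp) (by simp) b ?_
    intro x hx y hy e
    by_cases hyb : y = b
    · exact Or.inr hyb
    · left
      refine ⟨hy, ?_⟩
      rintro (h | h)
      · subst h
        exact e.ne (hc x hx.1 e.symm)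
      · exact hyb h
  have hmem : ∀ w, w ∈ S \ {a, b, a1} ↔ w ∈ S ∧ w ≠ a ∧ w ≠ b ∧ w ≠ a1 := by
    intro w; simp
  by_cases hw : ∃ w ∈ S \ {a, b, a1}, w ≠ z
  · have hst := star (S \ {a, b, a1}) Set.sdiff_subset (by simp) (by simp) hw a1 b (by
      intro x hx y hy e
      have hx' := (hmem x).1 hx
      by_cases hyb : y = b
      · exact Or.inr (Or.inr hyb)
      by_cases hy1 : y = a1
      · exact Or.inr (Or.inl hy1)
      · left
        refine (hmem y).2 ⟨hy, ?_, hyb, hy1⟩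
        intro h
        subst h
        exact hx'.2.2.2 (hc x hx'.1 e.symm)) a ha
    rcases hst with h | h | h
    · exact ((hmem a).1 h).2.1 rfl
    · exact haa h
    · exact hab h
  · push Not at hw
    have hall : ∀ w ∈ S, w = a ∨ w = b ∨ w = a1 ∨ w = z := by
      intro w hwS
      by_contra h
      push Not at h
      exact h.2.2.2 (hw w ((hmem w).2 ⟨hwS, h.1, h.2.1, h.2.2.1⟩))
    have hv1 : v = a1 := by
      rcases hall v hv with h | h | h | h
      · exact absurd h hva
      · exact absurd h hvb
      · exact h
      · exact absurd h hvz
    subst hv1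
    have hd := hdeg v hv hva hvb hvz
    have hd3 : 3 ≤ dg G S v := by omega
    obtain ⟨p, hp, e1, hpa, hpb⟩ := dg_ex2 hd3 a b
    have hpz : p = z := by
      rcases hall p hp with h | h | h | h
      · exact absurd h hpa
      · exact absurd h hpb
      · exact absurd h.symm e1.ne
      · exact h
    subst hpz
    obtain ⟨q, hq, e2, hqa, hqz⟩ := dg_ex2 hd3 a p
    have hqb : q = b := by
      rcases hall q hq with h | h | h | h
      · exact absurd h hqa
      · exact h
      · exact absurd h.symm e2.ne
      · exact absurd h hqz
    subst hqb
    refine hgood {p} (by simpa using hp) ⟨p, rfl⟩ (fun h => hpa h.symm) (fun h => hpb h.symm) v ?_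
    intro x hx y hy e
    rw [Set.mem_singleton_iff] at hx
    subst hx
    rcases hall y hy with h | h | h | h
    · subst h
      exact absurd (hc x hp e.symm).symm hvz
    · subst h
      exact (htf v x y e1 e e2).elim
    · exact Or.inr h
    · exact Or.inl h

theorem two_cut [Finite V] {G : SimpleGraph V} {m : ℕ}
    {S : Set V} {a b z : V}
    (hsize : ∀ T : Set V, T.ncard < S.ncard → S3 G (m + 1) T)
    (hgood : Good G S a b)
    (hdeg : ∀ v ∈ S, v ≠ a → v ≠ b → v ≠ z → m + 3 ≤ dg G S v)
    {Z : Set V} (hZ : Z ⊆ S) (haZ : a ∉ Z) (hbZ : b ∉ Z) (hne : ∃ v ∈ Z, v ≠ z)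
    {u v w : V} (hcl : Cl2 G S Z u v) (hw : w ∈ S) (hwZ : w ∉ Z) (hwu : w ≠ u) (hwv : w ≠ v) :
    LP G S a b (2 ^ (m + 1 + 1)) := by
  obtain ⟨v0, hv0, hv0z⟩ := hne
  have hvS : v ∈ S ∧ v ∉ Z ∧ v ≠ u := by
    by_contra hc
    refine hgood Z hZ ⟨v0, hv0⟩ haZ hbZ u ?_
    intro x hx y hy e
    rcases hcl x hx y hy e with h | h | h
    · exact Or.inl h
    · exact Or.inr h
    · by_contra h'
      push Not at h'
      subst h
      exact hc ⟨hy, h'⟩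
  have huS : u ∈ S ∧ u ∉ Z := by
    by_contra hc
    refine hgood Z hZ ⟨v0, hv0⟩ haZ hbZ v ?_
    intro x hx y hy e
    rcases hcl x hx y hy e with h | h | h
    · exact Or.inl h
    · by_contra h'
      push Not at h'
      subst h
      exact hc ⟨hy, h'.1⟩
    · exact Or.inr h
  have hTS : insert u (insert v Z) ⊆ S := by
    rintro x (h | h | h)
    · exact h ▸ huS.1
    · exact h ▸ hvS.1
    · exact hZ h
  have hlt : (insert u (insert v Z)).ncard < S.ncard := by
    refine Set.ncard_lt_ncard ⟨hTS, fun h => ?_⟩ (Set.toFinite _)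
    rcases h hw with h | h | h
    · exact hwu h
    · exact hwv h
    · exact hwZ h
  have hnb : ∀ x ∈ Z, ∀ y ∈ S, G.Adj x y → y ∈ insert u (insert v Z) := by
    intro x hx y hy e
    rcases hcl x hx y hy e with h | h | h
    · exact Or.inr (Or.inr h)
    · exact Or.inl h
    · exact Or.inr (Or.inl h)
  have hmain : LP G (insert u (insert v Z)) u v (2 ^ (m + 1 + 1)) := by
    refine hsize _ hlt u v z hvS.2.2.symm (Or.inl rfl) (Or.inr (Or.inl rfl)) ?_ ?_ ?_
    · intro U hU hUne huU hvU t hclU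
      have hUZ : U ⊆ Z := by
        intro x hx
        rcases hU hx with h | h | h
        · exact absurd (h ▸ hx) huU
        · exact absurd (h ▸ hx) hvU
        · exact h
      refine hgood U (hUZ.trans hZ) hUne (fun h => haZ (hUZ h)) (fun h => hbZ (hUZ h)) t ?_
      intro x hx y hy e
      exact hclU x hx y (hnb x (hUZ hx) y hy e) e
    · rintro x (h | h | h) hxu hxv hxz
      · exact absurd h hxu
      · exact absurd h hxv
      · exact (hdeg x (hZ h) (fun h' => haZ (h' ▸ h)) (fun h' => hbZ (h' ▸ h)) hxz).trans
          (dg_le (hnb x h))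
    · exact ⟨v0, Or.inr (Or.inr hv0), fun h => huS.2 (h ▸ hv0), fun h => hvS.2.1 (h ▸ hv0), hv0z⟩
  obtain ⟨P, Q, hP, hQ, hPQ, hpaths⟩ := menger2 (G := G) a b (S \ Z).ncard (S \ Z) u v le_rfl
    huS ⟨hvS.1, hvS.2.1⟩ (by
      intro U hU t huU hvU haU hbU hclU
      refine hgood (U ∪ Z) (Set.union_subset (fun x hx => (hU hx).1) hZ) ⟨v0, Or.inr hv0⟩
        (by rintro (h | h); exacts [haU h, haZ h]) (by rintro (h | h); exacts [hbU h, hbZ h]) t ?_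
      rintro x (hx | hx) y hy e
      · by_cases hyZ : y ∈ Z
        · exact Or.inl (Or.inr hyZ)
        · rcases hclU x hx y ⟨hy, hyZ⟩ e with h | h
          · exact Or.inl (Or.inl h)
          · exact Or.inr h
      · rcases hcl x hx y hy e with h | h | h
        · exact Or.inl (Or.inr h)
        · subst h
          rcases huU with h | h
          · exact Or.inl (Or.inl h)
          · exact Or.inr h
        · subst h
          rcases hvU with h | h
          · exact Or.inl (Or.inl h)
          · exact Or.inr h)
  have glue : ∀ (P Q T : Set V) (u v : V), P ⊆ S → Q ⊆ S → T ⊆ S → (∀ w ∈ P, w ∉ Q) →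
      (∀ w ∈ T, w ∈ P → w = u ∨ w = v) → (∀ w ∈ T, w ∈ Q → w = u ∨ w = v) →
      LP G P u a 0 → LP G Q v b 0 → LP G T u v (2 ^ (m + 1 + 1)) →
      LP G S a b (2 ^ (m + 1 + 1)) := by
    intro P Q T u v hP hQ hT hPQ hTP hTQ h1 h2 h3
    have hu := h1.left_mem
    have hv := h2.left_mem
    have h4 := h3.trans h2 (T := T ∪ Q) (by
      intro w hw hw'
      rcases hTQ w hw hw' with h | h
      · subst h
        exact absurd hw' (hPQ w hu)
      · exact h) Set.subset_union_left Set.subset_union_right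
    have h5 := h1.symm.trans h4 (T := S) (by
      rintro w hw (hw' | hw')
      · rcases hTP w hw' hw with h | h
        · exact h
        · subst h
          exact absurd hv (hPQ w hw)
      · exact absurd hw' (hPQ w hw)) hP (Set.union_subset hT hQ)
    exact h5.mono subset_rfl (by omega)
  have hTX : ∀ w ∈ insert u (insert v Z), w ∈ S \ Z → w = u ∨ w = v := by
    rintro w (h | h | h) hw
    · exact Or.inl h
    · exact Or.inr h
    · exact absurd h hw.2
  rcases hpaths with ⟨h1, h2⟩ | ⟨h1, h2⟩
  · exact glue P Q _ u v (fun x hx => (hP hx).1) (fun x hx => (hQ hx).1) hTS hPQ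
      (fun w hw hw' => hTX w hw (hP hw')) (fun w hw hw' => hTX w hw (hQ hw')) h1 h2 hmain
  · exact glue Q P _ v u (fun x hx => (hQ hx).1) (fun x hx => (hP hx).1) hTS
      (fun w h h' => hPQ w h' h)
      (fun w hw hw' => (hTX w hw (hQ hw')).symm) (fun w hw hw' => (hTX w hw (hP hw')).symm)
      h2 h1 hmain.symm

theorem main_ind [Finite V] {G : SimpleGraph V} (htf : TF G) (hspl : SPL G) (m : ℕ) :
    ∀ S, S3 G m S := by
  induction m with
  | zero => exact base_case
  | succ m IH =>
    have key : ∀ N : ℕ, ∀ S : Set V, S.ncard = N → S3 G (m + 1) S := by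
      intro N
      induction N using Nat.strong_induction_on with
      | _ N ihN =>
      intro S hSN a b z hab ha hb hgood hdeg hne
      have hsize : ∀ T : Set V, T.ncard < S.ncard → S3 G (m + 1) T :=
        fun T hT => ihN T.ncard (hSN ▸ hT) T rfl
      have hdeg : ∀ v ∈ S, v ≠ a → v ≠ b → v ≠ z → m + 3 ≤ dg G S v := hdeg
      by_cases hcut : ∃ Z ⊆ S, a ∉ Z ∧ b ∉ Z ∧ (∃ v ∈ Z, v ≠ z) ∧ ∃ u v, Cl2 G S Z u v ∧
          ∃ w ∈ S, w ∉ Z ∧ w ≠ u ∧ w ≠ v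
      · obtain ⟨Z, hZ, haZ, hbZ, hZne, u, v, hcl, w, hw, hwZ, hwu, hwv⟩ := hcut
        exact two_cut hsize hgood hdeg hZ haZ hbZ hZne hcl hw hwZ hwu hwv
      have star : ∀ Z ⊆ S, a ∉ Z → b ∉ Z → (∃ v ∈ Z, v ≠ z) → ∀ u v, Cl2 G S Z u v →
          ∀ w ∈ S, w ∈ Z ∨ w = u ∨ w = v := by
        intro Z hZ haZ hbZ hZne u v hcl w hw
        by_contra h
        push Not at h
        exact hcut ⟨Z, hZ, haZ, hbZ, hZne, u, v, hcl, w, hw, h⟩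
      have hgood' : Good G S b a := fun U hU hUne hbU haU => hgood U hU hUne haU hbU
      have hdeg' : ∀ v ∈ S, v ≠ b → v ≠ a → v ≠ z → m + 3 ≤ dg G S v :=
        fun v hv h1 h2 h3 => hdeg v hv h2 h1 h3
      have star' : ∀ Z ⊆ S, b ∉ Z → a ∉ Z → (∃ v ∈ Z, v ≠ z) → ∀ u v, Cl2 G S Z u v →
          ∀ w ∈ S, w ∈ Z ∨ w = u ∨ w = v :=
        fun Z hZ haZ hbZ => star Z hZ hbZ haZ
      have dega := deg_lem htf hab ha hgood hdeg hne star
      have degb := deg_lem htf hab.symm hb hgood' hdeg' (by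
        obtain ⟨v, hv, h1, h2, h3⟩ := hne
        exact ⟨v, hv, h2, h1, h3⟩) star'
      obtain ⟨h, hha, hhb, hmat⟩ := hspl a b hab
      obtain ⟨C0, hC0⟩ : ∃ C0, C0 = reach G {v | v ∈ S ∧ h v} a := ⟨_, rfl⟩
      have haC0 : a ∈ C0 := by rw [hC0]; exact reach_self ⟨ha, hha⟩
      have hC0S : ∀ v ∈ C0, v ∈ S ∧ h v := by
        intro v hv
        rw [hC0] at hv
        have h1 := reach_sub hv
        exact h1
      have hC0step : ∀ x ∈ C0, ∀ y ∈ S, h y → G.Adj x y → y ∈ C0 := by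
        intro x hx y hy hhy e
        rw [hC0] at hx ⊢
        exact reach_step hx ⟨hy, hhy⟩ e
      have hC0conn : Conn G C0 a := by rw [hC0]; exact reach_conn
      obtain ⟨D, hDdef⟩ : ∃ D, D = reach G (S \ C0) b := ⟨_, rfl⟩
      have hbD : b ∈ D := by rw [hDdef]; exact reach_self ⟨hb, fun h' => hhb (hC0S b h').2⟩
      have hDS : ∀ v ∈ D, v ∈ S ∧ v ∉ C0 := by
        intro v hv
        rw [hDdef] at hv
        have h1 := reach_sub hv
        exact h1
      have hDstep : ∀ x ∈ D, ∀ y ∈ S, y ∉ C0 → G.Adj x y → y ∈ D := by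
        intro x hx y hy hhy e
        rw [hDdef] at hx ⊢
        exact reach_step hx ⟨hy, hhy⟩ e
      have hDconn : Conn G D b := by rw [hDdef]; exact reach_conn
      have haC : a ∈ S \ D := ⟨ha, fun h' => (hDS a h').2 haC0⟩
      have hcross : ∀ x ∈ S \ D, ∀ y ∈ D, G.Adj x y → x ∈ C0 ∧ h x ∧ ¬ h y := by
        intro x hx y hy e
        have hx0 : x ∈ C0 := by
          by_contra hx0
          exact hx.2 (hDstep y hy x hx.1 hx0 e.symm)
        refine ⟨hx0, (hC0S x hx0).2, fun hhy => ?_⟩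
        exact (hDS y hy).2 (hC0step x hx0 y (hDS y hy).1 hhy e)
      have hCconn : Conn G (S \ D) a := by
        intro U hU hUne haU
        by_cases hUC : ∃ u ∈ U, u ∈ C0
        · obtain ⟨u, hu, huC⟩ := hUC
          obtain ⟨x, hx, y, hy, hyU, e⟩ := hC0conn (U ∩ C0) Set.inter_subset_right ⟨u, hu, huC⟩
            (fun h' => haU h'.1)
          exact ⟨x, hx.1, y, ⟨(hC0S y hy).1, fun h' => (hDS y h').2 hy⟩,
            fun h' => hyU ⟨h', hy⟩, e⟩
        · push Not at hUC
          by_contra hc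
          push Not at hc
          refine hgood U (fun x hx => (hU hx).1) hUne haU (fun h' => (hU h').2 hbD) a ?_
          intro x hx y hy e
          left
          by_contra hyU
          by_cases hyD : y ∈ D
          · exact hUC x hx (hcross x (hU hx) y hyD e).1
          · exact hc x hx y ⟨hy, hyD⟩ hyU e
      have u1 : ∀ y ∈ D, ∀ x ∈ S \ D, ∀ x' ∈ S \ D, G.Adj x y → G.Adj x' y → x = x' := by
        intro y hy x hx x' hx' e e'
        have h1 := hcross x hx y hy e
        have h2 := hcross x' hx' y hy e'
        exact hmat y x x' e.symm e'.symm (by tauto) (by tauto)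
      have u2 : ∀ x ∈ S \ D, ∀ y ∈ D, ∀ y' ∈ D, G.Adj x y → G.Adj x y' → y = y' := by
        intro x hx y hy y' hy' e e'
        have h1 := hcross x hx y hy e
        have h2 := hcross x hx y' hy' e'
        exact hmat x y y' e e' (by tauto) (by tauto)
      have hCne : ∃ v ∈ S \ D, v ≠ a := by
        by_contra hc
        push Not at hc
        have hD' : ∀ y ∈ S, G.Adj a y → y ∈ D := by
          intro y hy e
          by_contra hyD
          exact e.ne (hc y ⟨hy, hyD⟩).symm
        obtain ⟨y, hy, e, -⟩ := dega a
        obtain ⟨y', hy', e', hne'⟩ := dega y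
        exact hne' (u2 a haC y' (hD' y' hy' e') y (hD' y hy e) e' e)
      have hDne : ∃ v ∈ D, v ≠ b := by
        by_contra hc
        push Not at hc
        have hD' : ∀ y ∈ S, G.Adj b y → y ∈ S \ D := by
          intro y hy e
          refine ⟨hy, fun hyD => e.ne (hc y hyD).symm⟩
        obtain ⟨y, hy, e, -⟩ := degb b
        obtain ⟨y', hy', e', hne'⟩ := degb y
        exact hne' (u1 b hbD y' (hD' y' hy' e') y (hD' y hy e) e'.symm e.symm)
      have hSiff : ∀ v, v ∈ S ↔ v ∈ S \ D ∨ v ∈ D := by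
        intro v
        constructor
        · intro hv
          by_cases hvD : v ∈ D
          · exact Or.inr hvD
          · exact Or.inl ⟨hv, hvD⟩
        · rintro (hv | hv)
          · exact hv.1
          · exact (hDS v hv).1
      have hpow : 2 ^ (m + 1 + 1) ≤ 2 * 2 ^ (m + 1) := by rw [pow_succ 2 (m + 1)]; omega
      by_cases hz : z ∈ D
      · refine ((split_step htf IH hab.symm hsize hgood' hdeg' star' (fun v => (hSiff v).trans or_comm)
          (fun v hv h' => h'.2 hv) hbD haC hDconn hCconn ?_ ?_ hDne hCne
          (fun h' => h'.2 hz)).symm).mono subset_rfl hpow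
        · intro x hx y hy y' hy' e e'
          exact u2 x hx y hy y' hy' e.symm e'.symm
        · intro y hy x hx x' hx' e e'
          exact u1 y hy x hx x' hx' e.symm e'.symm
      · exact (split_step htf IH hab hsize hgood hdeg star hSiff (fun v hv => hv.2) haC hbD hCconn
          hDconn u1 u2 hCne hDne hz).mono subset_rfl hpow
    exact fun S => key _ S rfl

end Helpers

theorem cube_adj {n : ℕ} {x y : Fin n → Bool} (h : (hypercube n).Adj x y) :
    ∃ i, x i ≠ y i ∧ ∀ j, j ≠ i → x j = y j := by
  have h1 : hammingDist x y = 1 := by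
    rw [hypercube, SimpleGraph.fromRel_adj] at h
    rcases h.2 with h | h
    · exact h
    · rw [hammingDist_comm]; exact h
  rw [hammingDist, Finset.card_eq_one] at h1
  obtain ⟨i, hi⟩ := h1
  have hm : ∀ j, x j ≠ y j ↔ j = i := by
    intro j
    have := Finset.ext_iff.1 hi j
    simpa using this
  refine ⟨i, (hm i).2 rfl, fun j hj => ?_⟩
  by_contra h'
  exact hj ((hm j).1 h')

theorem cube_tf (n : ℕ) : TF (hypercube n) := by
  intro x y w h1 h2 h3
  obtain ⟨i, hi, hi'⟩ := cube_adj h1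
  obtain ⟨j, hj, hj'⟩ := cube_adj h2
  obtain ⟨k, hk, hk'⟩ := cube_adj h3
  by_cases hij : i = j
  · subst hij
    apply h3.ne
    funext l
    by_cases hl : l = i
    · subst hl
      revert hi hj
      cases x l <;> cases y l <;> cases w l <;> simp
    · exact (hi' l hl).trans (hj' l hl)
  · have h1 : x i ≠ w i := by rw [← hj' i hij]; exact hi
    have h2 : x j ≠ w j := by rw [hi' j (fun h => hij h.symm)]; exact hj
    have e1 : i = k := by
      by_contra h
      exact h1 (hk' i h)
    have e2 : j = k := by
      by_contra h
      exact h2 (hk' j h)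
    exact hij (e1.trans e2.symm)

theorem cube_spl (n : ℕ) : SPL (hypercube n) := by
  intro a b hab
  obtain ⟨i, hi⟩ := Function.ne_iff.1 hab
  have key : ∀ x y : Fin n → Bool, (hypercube n).Adj x y → (x i = a i ↔ ¬ y i = a i) →
      x i ≠ y i ∧ ∀ j, j ≠ i → x j = y j := by
    intro x y h h'
    obtain ⟨k, hk, hk'⟩ := cube_adj h
    have hxy : x i ≠ y i := by
      intro e
      rw [e] at h'
      tauto
    have hik : i = k := by
      by_contra hne
      exact hxy (hk' i hne)
    subst hik
    exact ⟨hk, hk'⟩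
  refine ⟨fun x => x i = a i, rfl, fun h => hi h.symm, ?_⟩
  intro x y y' e e' h h'
  have h1 := key x y e h
  have h2 := key x y' e' h'
  funext l
  by_cases hl : l = i
  · subst hl
    have h3 := h1.1
    have h4 := h2.1
    revert h3 h4
    cases x l <;> cases y l <;> cases y' l <;> simp
  · exact (h1.2 l hl).symm.trans (h2.2 l hl)

theorem good_of_two {V : Type*} {K : SimpleGraph V} (G : K.Subgraph) (h2 : TwoConnected G.coe)
    {a b : V} (ha : a ∈ G.verts) (hb : b ∈ G.verts) (hab : a ≠ b) :
    Good G.spanningCoe G.verts a b := by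
  intro U hU hne haU hbU t hcl
  -- reduce to t in the vertex set but outside U
  obtain ⟨t, ht, htU, hcl⟩ : ∃ t, t ∈ G.verts ∧ t ∉ U ∧ Cl G.spanningCoe G.verts U t := by
    by_cases h : t ∈ G.verts ∧ t ∉ U
    · exact ⟨t, h.1, h.2, hcl⟩
    · refine ⟨a, ha, haU, ?_⟩
      intro x hx y hy e
      rcases hcl x hx y hy e with h' | h'
      · exact Or.inl h'
      · left
        by_contra hyU
        subst h'
        exact h ⟨hy, hyU⟩
  obtain ⟨s, hs, hsU, hst⟩ : ∃ s, s ∈ G.verts ∧ s ∉ U ∧ s ≠ t := by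
    by_cases h : a = t
    · exact ⟨b, hb, hbU, fun h' => hab (h.trans h'.symm)⟩
    · exact ⟨a, ha, haU, h⟩
  obtain ⟨u, hu⟩ := hne
  have hut : u ≠ t := fun h => htU (h ▸ hu)
  have hconn := h2.2 ⟨t, ht⟩
  have hmem : ∀ v (hv : v ∈ G.verts), v ≠ t → (⟨v, hv⟩ : G.verts) ∈
      ((⊤ : G.coe.Subgraph).deleteVerts {⟨t, ht⟩}).verts := by
    intro v hv hvt
    simp [SimpleGraph.Subgraph.deleteVerts_verts, hvt]
  obtain ⟨p⟩ := hconn.preconnected ⟨⟨u, hU hu⟩, hmem u (hU hu) hut⟩ ⟨⟨s, hs⟩, hmem s hs hst⟩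
  have walk : ∀ x y, (((⊤ : G.coe.Subgraph).deleteVerts {⟨t, ht⟩}).coe.Walk x y) →
      x.1.1 ∈ U → y.1.1 ∈ U := by
    intro x y p
    induction p with
    | nil => exact id
    | @cons x y w e p ih =>
      intro hx
      apply ih
      have e1 : G.Adj x.1.1 y.1.1 := by
        have := e
        simp only [SimpleGraph.Subgraph.coe_adj, SimpleGraph.Subgraph.deleteVerts_adj] at this
        simpa using this.2.2.2.2
      have hyt : y.1.1 ≠ t := by
        intro h
        exact y.2.2 (Subtype.ext h)
      rcases hcl x.1.1 hx y.1.1 y.1.2 e1 with h | h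
      · exact h
      · exact absurd h hyt
  exact hsU (walk _ _ p hu)

theorem walk_back {V : Type*} {K : SimpleGraph V} (G : K.Subgraph) {a b : V}
    (p : G.spanningCoe.Walk a b) : ∀ (ha : a ∈ G.verts) (hb : b ∈ G.verts),
    ∃ q : G.coe.Walk ⟨a, ha⟩ ⟨b, hb⟩, q.length = p.length ∧
      q.support.map Subtype.val = p.support := by
  induction p with
  | nil => intro ha hb; exact ⟨SimpleGraph.Walk.nil, rfl, rfl⟩
  | @cons x y w e p ih =>
    intro ha hb
    have e' : G.Adj x y := e
    obtain ⟨q, hq, hq'⟩ := ih e'.snd_mem hb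
    refine ⟨SimpleGraph.Walk.cons (show G.coe.Adj ⟨x, ha⟩ ⟨y, e'.snd_mem⟩ from e') q, ?_, ?_⟩
    · simp [hq]
    · simp [hq']

/-- Let `G` be a 2-connected subgraph of `Q_n` with distinct vertices `a, b` such that
every vertex `z ∉ {a,b}` has degree at least `d ≥ 2` in `G`. Then `G` contains an
`a-b` path of length at least `2^(d-1)`. -/
theorem hypercube_twoConnected_path_weak (n d : ℕ) (hd : 2 ≤ d)
    (G : (hypercube n).Subgraph) (h2 : TwoConnected G.coe)
    (a b : Fin n → Bool) (ha : a ∈ G.verts) (hb : b ∈ G.verts) (hab : a ≠ b)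
    (hdeg : ∀ z ∈ G.verts, z ≠ a → z ≠ b → d ≤ (G.neighborSet z).ncard) :
    ∃ p : G.coe.Walk ⟨a, ha⟩ ⟨b, hb⟩, p.IsPath ∧ 2 ^ (d - 1) ≤ p.length := by
  obtain ⟨m, rfl⟩ : ∃ m, d = m + 2 := ⟨d - 2, by omega⟩
  have htf : TF G.spanningCoe := by
    intro x y w h1 h2 h3
    exact cube_tf n x y w (G.adj_sub h1) (G.adj_sub h2) (G.adj_sub h3)
  have hspl : SPL G.spanningCoe := by
    intro x y hxy
    obtain ⟨h, h1, h2, h3⟩ := cube_spl n x y hxy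
    exact ⟨h, h1, h2, fun p q r e e' => h3 p q r (G.adj_sub e) (G.adj_sub e')⟩
  have hthird : ∃ v ∈ G.verts, v ≠ a ∧ v ≠ b ∧ v ≠ a := by
    by_contra hc
    push Not at hc
    have hall : ∀ v : G.verts, v.1 = a ∨ v.1 = b := by
      intro v
      by_contra h
      push Not at h
      exact h.1 (hc v.1 v.2 h.1 h.2)
    obtain ⟨x, y, z, hxy, hxz, hyz⟩ := h2.1
    have hxy' : x.1 ≠ y.1 := fun h => hxy (Subtype.ext h)
    have hxz' : x.1 ≠ z.1 := fun h => hxz (Subtype.ext h)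
    have hyz' : y.1 ≠ z.1 := fun h => hyz (Subtype.ext h)
    rcases hall x with h1 | h1 <;> rcases hall y with h2 | h2 <;> rcases hall z with h3 | h3 <;>
      rw [h1, h2] at hxy' <;> rw [h1, h3] at hxz' <;> rw [h2, h3] at hyz' <;> simp at *
  obtain ⟨p, hp, -, hl⟩ := main_ind htf hspl m G.verts a b a hab ha hb
    (good_of_two G h2 ha hb hab) (by
      intro v hv hva hvb _
      refine (hdeg v hv hva hvb).trans (le_of_eq ?_)
      unfold dg
      congr 1
      ext y
      exact ⟨fun e => ⟨SimpleGraph.Subgraph.Adj.snd_mem e, e⟩, fun e => e.2⟩) hthird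
  obtain ⟨q, hq, hq'⟩ := walk_back G p ha hb
  refine ⟨q, ?_, ?_⟩
  · rw [SimpleGraph.Walk.isPath_def]
    refine List.Nodup.of_map Subtype.val ?_
    rw [hq']
    exact hp.support_nodup
  · rw [hq]
    exact hl
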